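/- Let p ≥ 2 be an integer and η > 0, set E = η²/4, and let V, (c_k), (φ_k), (γ_k) satisfy all the hypotheses (i)–(vi) of the preceding boundedness lemma: V(x) = Σ_{k=1}^∞ c_k e^{−iφ_k x} γ_k(x) is real-valued; sup_k Var(γ_k,(0,∞)) < ∞; ∫_0^∞ (sup_k |γ_k(x)|)^p dx < ∞; Σ_k |c_k| < ∞; Σ_{k_1,…,k_j} |c_{k_1} ⋯ c_{k_j} h_j(η; φ_{k_1},…,φ_{k_j})| < ∞ for j = 1,…,p−1; Kη ≠ ε_1 φ_{k_1} + ⋯ + ε_J φ_{k_J} for all 1 ≤ K ≤ J ≤ p, all indices and all signs ε_i ∈ {±1}; and the representation is closed under complex conjugation via an involution k ↦ k* with c_{k*} = conj(c_k), φ_{k*} = −φ_k, γ_{k*} = conj(γ_k). Then for every real-valued solution u of −u'' + V u = E u on (0,∞) that is not identically zero, the limit lim_{x→∞} ( u'(x)² + E·u(x)² ) exists and is a finite positive real number. -/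

import Mathlib

open scoped BigOperators ENNReal
open MeasureTheory

/-- The functions `h_J` of `1+J` real variables (the extra variables in the `ℕ → ℝ`
argument beyond the first `J` are ignored). -/
noncomputable def hFun : ℕ → ℝ → (ℕ → ℝ) → ℝ
  | 0, _, _ => 1
  | (J+1), η, φ =>
      (η - ∑ i ∈ Finset.range (J+1), φ i)⁻¹ *
        ∑ j ∈ (Finset.range (J+1)).attach,
          hFun j.1 η φ * hFun (J - j.1) η (fun i => φ (i + j.1))
  termination_by J _ _ => J
  decreasing_by
  · exact Nat.lt_of_lt_of_le (Finset.mem_range.mp j.2) (Nat.le_refl _)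
  · exact Nat.lt_succ_of_le (Nat.sub_le J j.1)

/-- Pad a tuple `m : Fin J → ℕ` of indices into a function `ℕ → ℝ` listing `φ_{m_1},…,φ_{m_J}`. -/
noncomputable def padFin (J : ℕ) (φ : ℕ → ℝ) (m : Fin J → ℕ) : ℕ → ℝ :=
  fun n => if h : n < J then φ (m ⟨n, h⟩) else 0

/-- A real-valued solution `u` (with derivative `u'`) of `-u'' + V u = E u` on `(0,∞)`. -/
def IsWeakSolutionReal (V : ℝ → ℝ) (E : ℝ) (u u' : ℝ → ℝ) : Prop :=
  (∀ x ∈ Set.Ioi (0:ℝ), HasDerivAt u (u' x) x) ∧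
  ∀ a b : ℝ, 0 < a → a ≤ b →
    IntervalIntegrable (fun x => V x * u x - E * u x) volume a b ∧
    u' b - u' a = ∫ x in a..b, (V x * u x - E * u x)

/-!
Let `A = u' + i (η / 2) u`, so that `|A|² = u'² + E u²`. If `g` solved the Riccati equation
`g' = -iη (g - 1) + i (V / η) g²`, the pairing `y = conj A - (1 - g) A` would satisfy a diagonal
linear equation and `|y|² / (1 - |1 - g|²)` would be constant. For an approximate solution `g` with
defect `ρ`, the logarithmic derivative of this quantity is of the order of `|ρ|` wherever `g` is
close to `1`. Hence, if `ρ` is integrable and `g → 1` at infinity, the quantity has a positive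
limit, which is then also the limit of `|A|²`.

The Riccati equation is solved formally by the series
`∑_J η^{-J} ∑_{k_1, …, k_J} h_J(η; φ_{k_1}, …, φ_{k_J}) ∏_i c_{k_i} e^{-iφ_{k_i} x} γ_{k_i}(x)`:
comparing the coefficients of each exponential gives exactly the recursion for `h_J`, the
derivatives of the `γ_k` being integrable errors. Truncated at order `p - 1`, the series leaves
an error of degree at least `p` in the `γ_k`, which is integrable because `sup_k |γ_k|` lies
in `L^p`.

The `γ_k` need not be differentiable, so they are first averaged twice over unit intervals. Both the
change in `γ_k` and the new derivative at `x` are bounded by the variation of `γ_k` between `x` and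
`x + 2`, whose integral over `x` is at most twice the total variation.
-/

noncomputable section

open Filter Set Topology

section Derivatives

variable {F : ℝ → ℝ} {S : Set ℝ} {a b : ℝ}

theorem pos_of_abs_deriv_le {K : ℝ} (hS : S.Countable) (hab : a ≤ b)
    (hF : ContinuousOn F (Icc a b)) (hdiff : ∀ x ∈ Ioo a b \ S, DifferentiableAt ℝ F x)
    (hbound : ∀ x ∈ Ioo a b \ S, |deriv F x| ≤ K * F x) (ha : 0 < F a) : 0 < F b := by
  have hexp : ContinuousOn (fun x => Real.exp (K * x)) (Icc a b) := by fun_prop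
  have hboundae : ∀ᵐ x ∂volume.restrict (Ioo a b), |deriv F x| ≤ K * F x := by
    filter_upwards [ae_restrict_mem measurableSet_Ioo, hS.ae_notMem _] with x hx hxS
    exact hbound x ⟨hx, hxS⟩
  have hint : IntervalIntegrable (deriv F) volume a b := by
    rw [intervalIntegrable_iff_integrableOn_Ioo_of_le hab]
    exact Integrable.mono' ((hF.const_smul K).integrableOn_Icc.mono_set Ioo_subset_Icc_self)
      (aestronglyMeasurable_deriv F _) hboundae
  have hFexp : F b * Real.exp (K * b) - F a * Real.exp (K * a)
      = ∫ x in a..b, (deriv F x * Real.exp (K * x) + F x * (Real.exp (K * x) * K)) := by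
    refine (integral_eq_of_hasDerivAt_off_countable_of_le (fun x => F x * Real.exp (K * x)) _ hab
      hS (hF.mul hexp) (fun x hx => (hdiff x hx).hasDerivAt.mul ?_) ?_).symm
    · simpa using ((hasDerivAt_id x).const_mul K).exp
    · rw [← uIcc_of_le hab] at hF hexp
      exact (hint.mul_continuousOn hexp).add
        (hF.mul (hexp.mul continuousOn_const)).intervalIntegrable
  have hmono : 0 ≤ ∫ x in a..b, (deriv F x * Real.exp (K * x) + F x * (Real.exp (K * x) * K)) := by
    refine intervalIntegral.integral_nonneg_of_ae_restrict hab ?_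
    rw [← restrict_Ioo_eq_restrict_Icc]
    filter_upwards [hboundae] with x hx
    calc (0 : ℝ) ≤ (deriv F x + K * F x) * Real.exp (K * x) := by
          have := neg_le_of_abs_le hx
          exact mul_nonneg (by linarith) (Real.exp_nonneg _)
      _ = _ := by ring
  refine pos_of_mul_pos_left (?_ : 0 < F b * Real.exp (K * b)) (Real.exp_nonneg _)
  have := mul_pos ha (Real.exp_pos (K * a))
  linarith

theorem exists_pos_tendsto_of_abs_deriv_le {κ : ℝ → ℝ} (hS : S.Countable)
    (hF : ContinuousOn F (Ici a)) (hpos : ∀ x ∈ Ici a, 0 < F x)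
    (hdiff : ∀ x ∈ Ioi a \ S, DifferentiableAt ℝ F x)
    (hbound : ∀ x ∈ Ioi a \ S, |deriv F x| ≤ κ x * F x) (hκ : IntegrableOn κ (Ioi a)) :
    ∃ L, 0 < L ∧ Tendsto F atTop (𝓝 L) := by
  have hint : IntegrableOn (fun x => deriv F x / F x) (Ioi a) := by
    refine Integrable.mono' hκ ((aestronglyMeasurable_deriv F _).div₀
      ((hF.mono Ioi_subset_Ici_self).aestronglyMeasurable measurableSet_Ioi)) ?_
    filter_upwards [ae_restrict_mem measurableSet_Ioi, hS.ae_notMem _] with x hx hxS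
    have hFx := hpos x (Ioi_subset_Ici_self hx)
    rw [norm_div, Real.norm_eq_abs, Real.norm_of_nonneg hFx.le, div_le_iff₀ hFx]
    exact hbound x ⟨hx, hxS⟩
  have hlog : ∀ x ∈ Ici a, ∫ t in a..x, deriv F t / F t = Real.log (F x) - Real.log (F a) :=
    fun x hx => integral_eq_of_hasDerivAt_off_countable_of_le (fun t => Real.log (F t)) _ hx hS
      ((hF.mono Icc_subset_Ici_self).log fun t ht => (hpos t ht.1).ne')
      (fun t ht => (hdiff t ⟨ht.1.1, ht.2⟩).hasDerivAt.log (hpos t ht.1.1.le).ne')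
      ((intervalIntegrable_iff_integrableOn_Ioc_of_le hx).2 (hint.mono_set Ioc_subset_Ioi_self))
  have hFa := hpos a self_mem_Ici
  refine ⟨F a * Real.exp (∫ x in Ioi a, deriv F x / F x), mul_pos hFa (Real.exp_pos _), ?_⟩
  refine (((intervalIntegral_tendsto_integral_Ioi a hint tendsto_id).rexp).const_mul (F a)).congr'
    ?_
  filter_upwards [Ici_mem_atTop a] with x hx
  rw [id, hlog x hx, Real.exp_sub, Real.exp_log (hpos x hx), Real.exp_log hFa,
    mul_div_cancel₀ _ hFa.ne']

end Derivatives

section Riccati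

open ComplexConjugate

/-- The complex amplitude `u' + i √E u` of a solution at energy `E = η² / 4`, as a function of the
values `u` and `v = u'`. -/
def amplitude (η u v : ℝ) : ℂ := v + Complex.I * (η / 2) * u

/-- The right-hand side of the equation satisfied by the amplitude `A` of a solution of
`-u'' + V u = (η² / 4) u`. -/
def amplitudeField (η V : ℝ) (A : ℂ) : ℂ :=
  Complex.I * η / 2 * A - Complex.I * V / η * (A - conj A)

/-- The defect of an approximate solution `g` of the Riccati equation
`g' = -iη (g - 1) + i (V / η) g²`, as a function of the values of `V`, `g` and `g'` at a point. -/
def riccatiDefect (η V : ℝ) (g g' : ℂ) : ℂ :=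
  g' + Complex.I * η * (g - 1) - Complex.I * V / η * g ^ 2

/-- The pairing of an amplitude with an approximate solution of the Riccati equation; its equation
is linear and diagonal up to a multiple of the Riccati defect. -/
def riccatiPairing (A g : ℂ) : ℂ := conj A - (1 - g) * A

/-- The quantity that is conserved when `A` is the amplitude of a solution and `g` solves the
Riccati equation. -/
def riccatiInvariant (A g : ℂ) : ℝ := ‖riccatiPairing A g‖ ^ 2 / (1 - ‖1 - g‖ ^ 2)

theorem norm_amplitude_sq (η u v : ℝ) : ‖amplitude η u v‖ ^ 2 = v ^ 2 + η ^ 2 / 4 * u ^ 2 := by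
  rw [← Complex.normSq_eq_norm_sq, Complex.normSq_apply]
  simp [amplitude]
  ring

theorem hasDerivAt_amplitude {η V x : ℝ} {u u' : ℝ → ℝ} (hη : η ≠ 0) (hu : HasDerivAt u (u' x) x)
    (hu' : HasDerivAt u' (V * u x - η ^ 2 / 4 * u x) x) :
    HasDerivAt (fun t => amplitude η (u t) (u' t)) (amplitudeField η V (amplitude η (u x) (u' x)))
      x := by
  refine (hu'.ofReal_comp.add (hu.ofReal_comp.const_mul (Complex.I * (η / 2)))).congr_deriv ?_
  have hηC : (η : ℂ) ≠ 0 := Complex.ofReal_ne_zero.2 hη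
  simp only [amplitude, amplitudeField, map_add, map_mul, Complex.conj_ofReal, Complex.conj_I,
    map_div₀, map_ofNat]
  push_cast
  field_simp
  linear_combination (16 * (η : ℂ) * V * u x - 4 * η ^ 3 * u x) * Complex.I_sq

theorem ne_zero_of_hasDerivAt_amplitudeField {η K a b : ℝ} {V : ℝ → ℝ} {A : ℝ → ℂ} {S : Set ℝ}
    (hS : S.Countable) (hab : a ≤ b) (hV : ∀ x ∈ Ioo a b, |V x| ≤ K)
    (hAc : ContinuousOn A (Icc a b))
    (hA : ∀ x ∈ Ioo a b \ S, HasDerivAt A (amplitudeField η (V x) (A x)) x) (ha : A a ≠ 0) :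
    A b ≠ 0 := by
  have hderiv : ∀ x ∈ Ioo a b \ S, HasDerivAt (fun t => ‖A t‖ ^ 2)
      (-2 * (V x / η) * (conj (A x) * (Complex.I * (A x - conj (A x)))).re) x := fun x hx => by
    refine (hA x hx).norm_sq.congr_deriv ?_
    simp [Complex.inner, amplitudeField]
    ring
  have hpos : 0 < ‖A b‖ ^ 2 := by
    refine pos_of_abs_deriv_le (F := fun t => ‖A t‖ ^ 2) (K := 4 * (K / |η|)) hS hab
      (hAc.norm.pow 2) (fun x hx => (hderiv x hx).differentiableAt) (fun x hx => ?_) (by positivity)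
    have hVη : |V x / η| ≤ K / |η| := by
      rw [abs_div]
      gcongr
      exact hV x hx.1
    have hre : |(conj (A x) * (Complex.I * (A x - conj (A x)))).re| ≤ ‖A x‖ * (‖A x‖ + ‖A x‖) :=
      calc _ ≤ ‖conj (A x) * (Complex.I * (A x - conj (A x)))‖ := Complex.abs_re_le_norm _
        _ ≤ _ := by
          rw [norm_mul, norm_mul, Complex.norm_I, one_mul, Complex.norm_conj]
          gcongr
          simpa using norm_sub_le (A x) (conj (A x))
    rw [(hderiv x hx).deriv, abs_mul, abs_mul, abs_neg, abs_two]
    calc 2 * |V x / η| * |(conj (A x) * (Complex.I * (A x - conj (A x)))).re|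
        ≤ 2 * (K / |η|) * (‖A x‖ * (‖A x‖ + ‖A x‖)) := by
          have := (abs_nonneg _).trans hVη
          gcongr
      _ = 4 * (K / |η|) * ‖A x‖ ^ 2 := by ring
  exact fun h => by simp [h] at hpos

section PointwiseDerivatives

variable {η V x : ℝ} {A g : ℝ → ℂ} {g' : ℂ}

theorem hasDerivAt_riccatiPairing (hA : HasDerivAt A (amplitudeField η V (A x)) x)
    (hg : HasDerivAt g g' x) :
    HasDerivAt (fun t => riccatiPairing (A t) (g t))
      (Complex.I * (V / η * g x - η / 2) * riccatiPairing (A x) (g x) +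
        riccatiDefect η V (g x) g' * A x) x := by
  refine (hA.star.sub ((hg.const_sub 1).mul hA)).congr_deriv ?_
  simp only [riccatiPairing, riccatiDefect, amplitudeField, ← starRingEnd_apply, map_sub, map_mul,
    map_div₀, Complex.conj_I, Complex.conj_ofReal, Complex.conj_conj, map_ofNat]
  ring

theorem hasDerivAt_norm_sq_riccatiPairing (hA : HasDerivAt A (amplitudeField η V (A x)) x)
    (hg : HasDerivAt g g' x) :
    HasDerivAt (fun t => ‖riccatiPairing (A t) (g t)‖ ^ 2)
      (-2 * (V / η) * (g x).im * ‖riccatiPairing (A x) (g x)‖ ^ 2 +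
        2 * (conj (riccatiPairing (A x) (g x)) * (riccatiDefect η V (g x) g' * A x)).re) x := by
  refine (hasDerivAt_riccatiPairing hA hg).norm_sq.congr_deriv ?_
  rw [← Complex.normSq_eq_norm_sq, Complex.normSq_apply]
  generalize riccatiPairing (A x) (g x) = y
  generalize riccatiDefect η V (g x) g' * A x = e
  simp [Complex.inner, ← Complex.ofReal_div]
  ring

theorem hasDerivAt_one_sub_norm_sq (hg : HasDerivAt g g' x) :
    HasDerivAt (fun t => 1 - ‖1 - g t‖ ^ 2)
      (-2 * (V / η) * (g x).im * (1 - ‖1 - g x‖ ^ 2) +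
        2 * (conj (1 - g x) * riccatiDefect η V (g x) g').re) x := by
  refine ((hg.const_sub 1).norm_sq.const_sub 1).congr_deriv ?_
  rw [← Complex.normSq_eq_norm_sq, Complex.normSq_apply]
  simp [Complex.inner, riccatiDefect, ← Complex.ofReal_div, mul_div_assoc, pow_two]
  ring

theorem hasDerivAt_riccatiInvariant (hA : HasDerivAt A (amplitudeField η V (A x)) x)
    (hg : HasDerivAt g g' x) (hgx : 1 - ‖1 - g x‖ ^ 2 ≠ 0) :
    HasDerivAt (fun t => riccatiInvariant (A t) (g t))
      (2 * ((conj (riccatiPairing (A x) (g x)) * (riccatiDefect η V (g x) g' * A x)).re -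
        riccatiInvariant (A x) (g x) * (conj (1 - g x) * riccatiDefect η V (g x) g').re) /
          (1 - ‖1 - g x‖ ^ 2)) x := by
  refine ((hasDerivAt_norm_sq_riccatiPairing hA hg).div
    (hasDerivAt_one_sub_norm_sq (η := η) (V := V) hg) hgx).congr_deriv ?_
  rw [riccatiInvariant]
  field_simp
  ring

end PointwiseDerivatives

theorem norm_mul_one_sub_le_norm_riccatiPairing (A g : ℂ) :
    ‖A‖ * (1 - ‖1 - g‖) ≤ ‖riccatiPairing A g‖ := by
  have := norm_sub_norm_le (conj A) ((1 - g) * A)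
  rw [Complex.norm_conj, norm_mul] at this
  calc ‖A‖ * (1 - ‖1 - g‖) = ‖A‖ - ‖1 - g‖ * ‖A‖ := by ring
    _ ≤ _ := this

theorem norm_riccatiPairing_le (A g : ℂ) : ‖riccatiPairing A g‖ ≤ ‖A‖ * (1 + ‖1 - g‖) := by
  have := norm_sub_le (conj A) ((1 - g) * A)
  rw [Complex.norm_conj, norm_mul] at this
  calc ‖riccatiPairing A g‖ ≤ ‖A‖ + ‖1 - g‖ * ‖A‖ := this
    _ = _ := by ring

theorem abs_deriv_riccatiInvariant_le {η V x : ℝ} {A g : ℝ → ℂ} {g' : ℂ}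
    (hA : HasDerivAt A (amplitudeField η V (A x)) x) (hg : HasDerivAt g g' x)
    (hgx : ‖1 - g x‖ ≤ 1 / 2) :
    |deriv (fun t => riccatiInvariant (A t) (g t)) x| ≤
      6 * ‖riccatiDefect η V (g x) g'‖ * riccatiInvariant (A x) (g x) := by
  have hN : 3 / 4 ≤ 1 - ‖1 - g x‖ ^ 2 := by nlinarith [norm_nonneg (1 - g x)]
  have hN0 : 0 < 1 - ‖1 - g x‖ ^ 2 := by linarith
  have hAy : ‖A x‖ ≤ 2 * ‖riccatiPairing (A x) (g x)‖ := by
    have := norm_mul_one_sub_le_norm_riccatiPairing (A x) (g x)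
    nlinarith [norm_nonneg (A x)]
  rw [(hasDerivAt_riccatiInvariant hA hg hN0.ne').deriv]
  set y := riccatiPairing (A x) (g x)
  set ρ := riccatiDefect η V (g x) g'
  set F := riccatiInvariant (A x) (g x)
  have hyF : ‖y‖ ^ 2 = F * (1 - ‖1 - g x‖ ^ 2) := (div_mul_cancel₀ _ hN0.ne').symm
  have hF : 0 ≤ F := div_nonneg (sq_nonneg _) hN0.le
  have hpair : |(conj y * (ρ * A x)).re| ≤ 2 * ‖ρ‖ * F * (1 - ‖1 - g x‖ ^ 2) :=
    calc |(conj y * (ρ * A x)).re| ≤ ‖conj y * (ρ * A x)‖ := Complex.abs_re_le_norm _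
      _ = ‖ρ‖ * ‖y‖ * ‖A x‖ := by rw [norm_mul, norm_mul, Complex.norm_conj]; ring
      _ ≤ ‖ρ‖ * ‖y‖ * (2 * ‖y‖) := by gcongr
      _ = 2 * ‖ρ‖ * F * (1 - ‖1 - g x‖ ^ 2) := by linear_combination 2 * ‖ρ‖ * hyF
  have hdisc : |F * (conj (1 - g x) * ρ).re| ≤ ‖ρ‖ * F * (1 - ‖1 - g x‖ ^ 2) :=
    calc |F * (conj (1 - g x) * ρ).re| ≤ F * ‖conj (1 - g x) * ρ‖ := by
          rw [abs_mul, abs_of_nonneg hF]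
          gcongr
          exact Complex.abs_re_le_norm _
      _ = ‖ρ‖ * F * ‖1 - g x‖ := by rw [norm_mul, Complex.norm_conj]; ring
      _ ≤ _ := by gcongr; linarith
  rw [abs_div, abs_of_pos hN0, div_le_iff₀ hN0, abs_mul, abs_two]
  linarith [abs_sub (conj y * (ρ * A x)).re (F * (conj (1 - g x) * ρ).re)]

theorem tendsto_norm_of_tendsto_riccatiInvariant {ι : Type*} {l : Filter ι} {A g : ι → ℂ} {L : ℝ}
    (hg : Tendsto g l (𝓝 1)) (hL : Tendsto (fun x => riccatiInvariant (A x) (g x)) l (𝓝 L)) :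
    Tendsto (fun x => ‖A x‖) l (𝓝 √L) := by
  have hz : Tendsto (fun x => ‖1 - g x‖) l (𝓝 0) := by simpa using (hg.const_sub 1).norm
  have hz1 : ∀ᶠ x in l, ‖1 - g x‖ < 1 := hz.eventually_lt_const one_pos
  have hy : Tendsto (fun x => ‖riccatiPairing (A x) (g x)‖) l (𝓝 √L) := by
    have := (hL.mul ((hz.pow 2).const_sub 1)).sqrt
    rw [zero_pow two_ne_zero, sub_zero, mul_one] at this
    refine this.congr' ?_
    filter_upwards [hz1] with x hx
    have hN : 1 - ‖1 - g x‖ ^ 2 ≠ 0 := by nlinarith [norm_nonneg (1 - g x)]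
    rw [riccatiInvariant, div_mul_cancel₀ _ hN, Real.sqrt_sq (norm_nonneg _)]
  refine tendsto_of_tendsto_of_tendsto_of_le_of_le'
    (by simpa using hy.div (hz.const_add 1) (by norm_num))
    (by simpa using hy.div (hz.const_sub 1) (by norm_num)) ?_ ?_
  · filter_upwards with x
    exact (div_le_iff₀ (by positivity)).2 (norm_riccatiPairing_le (A x) (g x))
  · filter_upwards [hz1] with x hx
    exact (le_div_iff₀ (sub_pos.2 hx)).2 (norm_mul_one_sub_le_norm_riccatiPairing (A x) (g x))

theorem exists_pos_tendsto_norm_of_riccatiDefect {η : ℝ} {V : ℝ → ℝ} {A g g' : ℝ → ℂ} {S : Set ℝ}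
    (hS : S.Countable) (hAc : ContinuousOn A (Ioi 0))
    (hA : ∀ x ∈ Ioi 0 \ S, HasDerivAt A (amplitudeField η (V x) (A x)) x)
    (hA0 : ∀ᶠ x in atTop, A x ≠ 0) (hg : ∀ x, HasDerivAt g (g' x) x)
    (hg1 : Tendsto g atTop (𝓝 1))
    (hρ : IntegrableOn (fun x => riccatiDefect η (V x) (g x) (g' x)) (Ioi 0)) :
    ∃ L, 0 < L ∧ Tendsto (fun x => ‖A x‖) atTop (𝓝 L) := by
  have hz : Tendsto (fun x => ‖1 - g x‖) atTop (𝓝 0) := by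
    simpa using (hg1.const_sub 1).norm
  obtain ⟨a, ha⟩ := eventually_atTop.1
    ((eventually_gt_atTop 0).and (hA0.and (hz.eventually_le_const (by norm_num : (0:ℝ) < 1 / 2))))
  have hgc : Continuous g := continuous_iff_continuousAt.2 fun x => (hg x).continuousAt
  have hAca : ContinuousOn A (Ici a) := hAc.mono fun x hx => (ha x hx).1
  have hN : ∀ x, a ≤ x → 0 < 1 - ‖1 - g x‖ ^ 2 := fun x hx => by
    nlinarith [norm_nonneg (1 - g x), (ha x hx).2.2]
  have hy : ∀ x, a ≤ x → 0 < ‖riccatiPairing (A x) (g x)‖ := fun x hx => by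
    refine lt_of_lt_of_le (mul_pos (norm_pos_iff.2 (ha x hx).2.1) ?_)
      (norm_mul_one_sub_le_norm_riccatiPairing _ _)
    linarith [(ha x hx).2.2]
  have hsub : ∀ x ∈ Ioi a \ S, x ∈ Ioi 0 \ S := fun x hx => ⟨(ha x hx.1.le).1, hx.2⟩
  have hFc : ContinuousOn (fun x => riccatiInvariant (A x) (g x)) (Ici a) := by
    simp only [riccatiInvariant, riccatiPairing]
    exact ContinuousOn.div (by fun_prop) (by fun_prop) fun x hx => (hN x hx).ne'
  obtain ⟨L, hL, hlim⟩ := exists_pos_tendsto_of_abs_deriv_le hS hFc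
    (fun x hx => div_pos (pow_pos (hy x hx) 2) (hN x hx))
    (fun x hx => (hasDerivAt_riccatiInvariant (hA x (hsub x hx)) (hg x)
      (hN x (le_of_lt hx.1)).ne').differentiableAt)
    (fun x hx => abs_deriv_riccatiInvariant_le (hA x (hsub x hx)) (hg x) (ha x (le_of_lt hx.1)).2.2)
    (IntegrableOn.mono_set (hρ.norm.const_mul 6) (Ioi_subset_Ioi (ha a le_rfl).1.le))
  exact ⟨√L, Real.sqrt_pos.2 hL, tendsto_norm_of_tendsto_riccatiInvariant hg1 hlim⟩

end Riccati

section MovingAverage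

variable {E : Type*} [NormedAddCommGroup E] [NormedSpace ℝ E]

/-- The average of a function over intervals of length one, used to smooth functions of bounded
variation: averaging twice makes them continuously differentiable. -/
def movingAverage (f : ℝ → E) (x : ℝ) : E := ∫ t in (0 : ℝ)..1, f (x + t)

/-- The average of a nonnegative extended real function over intervals of length one. -/
def lmovingAverage (F : ℝ → ℝ≥0∞) (x : ℝ) : ℝ≥0∞ := ∫⁻ t in Ioc (0 : ℝ) 1, F (x + t)

theorem norm_movingAverage_le {f : ℝ → E} {x C : ℝ} (h : ∀ t ∈ Ioc (0 : ℝ) 1, ‖f (x + t)‖ ≤ C) :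
    ‖movingAverage f x‖ ≤ C := by
  rw [← uIoc_of_le zero_le_one] at h
  simpa [movingAverage] using intervalIntegral.norm_integral_le_of_norm_le_const h

theorem norm_movingAverage_sub_le [CompleteSpace E] {f : ℝ → E} {x C : ℝ} {e : E}
    (hf : ∀ a b, IntervalIntegrable f volume a b)
    (h : ∀ t ∈ Ioc (0 : ℝ) 1, ‖f (x + t) - e‖ ≤ C) : ‖movingAverage f x - e‖ ≤ C := by
  have hsub : movingAverage f x - e = movingAverage (fun t => f t - e) x := by
    have hfx : IntervalIntegrable (fun t => f (x + t)) volume 0 1 := by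
      simpa using (hf x (x + 1)).comp_add_left x
    simp [movingAverage, intervalIntegral.integral_sub hfx]
  exact hsub ▸ norm_movingAverage_le h

theorem movingAverage_eq_sub {f : ℝ → E} (hf : ∀ a b, IntervalIntegrable f volume a b) :
    movingAverage f = fun x => (∫ t in (0 : ℝ)..(x + 1), f t) - ∫ t in (0 : ℝ)..x, f t := by
  funext x
  rw [intervalIntegral.integral_interval_sub_left (hf _ _) (hf _ _), movingAverage,
    intervalIntegral.integral_comp_add_left, add_zero]

theorem continuous_movingAverage {f : ℝ → E} (hf : ∀ a b, IntervalIntegrable f volume a b) :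
    Continuous (movingAverage f) := by
  have hprim := intervalIntegral.continuous_primitive hf 0
  rw [movingAverage_eq_sub hf]
  exact (hprim.comp (continuous_add_const 1)).sub hprim

theorem hasDerivAt_movingAverage [CompleteSpace E] {f : ℝ → E} (hf : Continuous f) (x : ℝ) :
    HasDerivAt (movingAverage f) (f (x + 1) - f x) x := by
  have hprim : ∀ y, HasDerivAt (fun y => ∫ t in (0 : ℝ)..y, f t) (f y) y := fun y =>
    hf.integral_hasStrictDerivAt 0 y |>.hasDerivAt
  rw [movingAverage_eq_sub fun _ _ => hf.intervalIntegrable _ _]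
  exact ((hprim (x + 1)).comp_add_const x 1).sub (hprim x)

theorem enorm_movingAverage_le (f : ℝ → E) (x : ℝ) :
    ‖movingAverage f x‖ₑ ≤ lmovingAverage (fun y => ‖f y‖ₑ) x := by
  rw [movingAverage, intervalIntegral.integral_of_le zero_le_one]
  exact enorm_integral_le_lintegral_enorm _

theorem lmovingAverage_mono {F G : ℝ → ℝ≥0∞} (h : F ≤ G) : lmovingAverage F ≤ lmovingAverage G :=
  fun x => lintegral_mono fun t => h (x + t)

variable {F : ℝ → ℝ≥0∞} {p : ℕ}

theorem measurable_lmovingAverage (hF : Measurable F) : Measurable (lmovingAverage F) :=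
  Measurable.lintegral_prod_right' (f := fun z : ℝ × ℝ => F (z.1 + z.2))
    (hF.comp (measurable_fst.add measurable_snd))

theorem lmovingAverage_pow_le (hF : Measurable F) (hp : p ≠ 0) (x : ℝ) :
    lmovingAverage F x ^ p ≤ lmovingAverage (fun y => F y ^ p) x := by
  have : IsProbabilityMeasure (volume.restrict (Ioc (0 : ℝ) 1)) := ⟨by simp⟩
  have hjensen := eLpNorm_le_eLpNorm_of_exponent_le (p := 1) (q := p)
    (μ := volume.restrict (Ioc (0 : ℝ) 1)) (by exact_mod_cast Nat.one_le_iff_ne_zero.2 hp)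
    (hF.comp (measurable_const_add x)).aestronglyMeasurable
  rw [eLpNorm_one_eq_lintegral_enorm, eLpNorm_eq_lintegral_rpow_enorm_toReal (by simpa using hp)
    (by simp), one_div,
    ENNReal.le_rpow_inv_iff (by simpa [Nat.pos_iff_ne_zero] using hp)] at hjensen
  simpa [lmovingAverage] using hjensen

theorem setLIntegral_Ioi_comp_add_right_le (F : ℝ → ℝ≥0∞) {a t : ℝ} (ht : 0 ≤ t) :
    ∫⁻ x in Ioi a, F (x + t) ≤ ∫⁻ x in Ioi a, F x := by
  rw [← lintegral_indicator measurableSet_Ioi, ← lintegral_indicator measurableSet_Ioi,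
    ← lintegral_add_right_eq_self ((Ioi a).indicator F) t]
  refine lintegral_mono (indicator_le fun x hx => ?_)
  rw [indicator_of_mem (show x + t ∈ Ioi a from lt_add_of_lt_of_nonneg hx ht)]

theorem lintegral_lmovingAverage_pow_le (hF : Measurable F) (hp : p ≠ 0) (a : ℝ) :
    ∫⁻ x in Ioi a, lmovingAverage F x ^ p ≤ ∫⁻ x in Ioi a, F x ^ p :=
  calc ∫⁻ x in Ioi a, lmovingAverage F x ^ p
      ≤ ∫⁻ x in Ioi a, ∫⁻ t in Ioc (0 : ℝ) 1, F (x + t) ^ p :=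
        lintegral_mono fun x => lmovingAverage_pow_le hF hp x
    _ = ∫⁻ t in Ioc (0 : ℝ) 1, ∫⁻ x in Ioi a, F (x + t) ^ p :=
        lintegral_lintegral_swap
          ((hF.comp (measurable_fst.add measurable_snd)).pow_const p).aemeasurable
    _ ≤ ∫⁻ _ in Ioc (0 : ℝ) 1, ∫⁻ x in Ioi a, F x ^ p :=
        setLIntegral_mono' measurableSet_Ioc fun t ht =>
          setLIntegral_Ioi_comp_add_right_le (fun x => F x ^ p) ht.1.le
    _ = ∫⁻ x in Ioi a, F x ^ p := by simp

end MovingAverage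

section TailVariation

variable {E : Type*} [NormedAddCommGroup E] {f : ℝ → E} {s : Set ℝ} {x y : ℝ}

/-- The variation of `f` on the part of `s` to the right of `x`: a decreasing function of `x` which
dominates the increments of `f`, and `f` itself when `f` vanishes at infinity. -/
def tailVariation (f : ℝ → E) (s : Set ℝ) (x : ℝ) : ℝ := (eVariationOn f (s ∩ Ici x)).toReal

theorem antitone_tailVariation (hf : BoundedVariationOn f s) : Antitone (tailVariation f s) :=
  fun _ _ hxy => ENNReal.toReal_mono (hf.mono inter_subset_left)
    (eVariationOn.mono f (inter_subset_inter_right s (Ici_subset_Ici.2 hxy)))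

theorem tailVariation_le (hf : BoundedVariationOn f s) (x : ℝ) :
    tailVariation f s x ≤ (eVariationOn f s).toReal :=
  ENNReal.toReal_mono hf (eVariationOn.mono f inter_subset_left)

theorem tendsto_tailVariation_atTop (hf : BoundedVariationOn f s) (hs : s ∈ atTop) :
    Tendsto (tailVariation f s) atTop (𝓝 0) := by
  have := hf.tendsto_eVariationOn_Ici_zero
  rw [inf_of_le_right (le_principal_iff.2 hs)] at this
  exact (ENNReal.tendsto_toReal ENNReal.zero_ne_top).comp this

theorem norm_sub_le_tailVariation_sub (hf : BoundedVariationOn f s) (hx : x ∈ s) (hy : y ∈ s)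
    (hxy : x ≤ y) : ‖f y - f x‖ ≤ tailVariation f s x - tailVariation f s y := by
  have hsplit : eVariationOn f (s ∩ Icc x y) + eVariationOn f (s ∩ Ici y)
      ≤ eVariationOn f (s ∩ Ici x) := by
    refine (eVariationOn.add_le_union f fun a ha b hb => ha.2.2.trans hb.2).trans
      (eVariationOn.mono f ?_)
    rw [← inter_union_distrib_left]
    exact inter_subset_inter_right s (union_subset Icc_subset_Ici_self (Ici_subset_Ici.2 hxy))
  have hreal := ENNReal.toReal_mono (hf.mono inter_subset_left) hsplit
  rw [ENNReal.toReal_add (hf.mono inter_subset_left) (hf.mono inter_subset_left)] at hreal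
  have hdist := (hf.mono (inter_subset_left (t := Icc x y))).dist_le
    ⟨hy, right_mem_Icc.2 hxy⟩ ⟨hx, left_mem_Icc.2 hxy⟩
  rw [dist_eq_norm] at hdist
  simp only [tailVariation]
  linarith

theorem norm_le_tailVariation (hf : BoundedVariationOn f s) (hs : s ∈ atTop)
    (hf0 : Tendsto f atTop (𝓝 0)) (hx : x ∈ s) : ‖f x‖ ≤ tailVariation f s x := by
  have hincr : Tendsto (fun y => ‖f y - f x‖) atTop (𝓝 ‖f x‖) := by
    simpa using (hf0.sub_const (f x)).norm
  refine le_of_tendsto_of_tendsto hincr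
    (by simpa using (tendsto_tailVariation_atTop hf hs).const_sub (tailVariation f s x)) ?_
  filter_upwards [hs, Ici_mem_atTop x] with y hy hxy
  exact norm_sub_le_tailVariation_sub hf hx hy hxy

theorem continuousAt_of_continuousAt_tailVariation (hf : BoundedVariationOn f s) (hs : s ∈ 𝓝 x)
    (hx : ContinuousAt (tailVariation f s) x) : ContinuousAt f x := by
  rw [ContinuousAt, tendsto_iff_norm_sub_tendsto_zero] at hx ⊢
  refine squeeze_zero' (Eventually.of_forall fun y => norm_nonneg _) ?_ hx
  filter_upwards [hs] with y hy
  have hxs := mem_of_mem_nhds hs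
  rw [Real.norm_eq_abs]
  rcases le_total x y with hxy | hxy
  · rw [abs_sub_comm]
    exact (norm_sub_le_tailVariation_sub hf hxs hy hxy).trans (le_abs_self _)
  · rw [norm_sub_rev]
    exact (norm_sub_le_tailVariation_sub hf hy hxs hxy).trans (le_abs_self _)

theorem countable_setOf_not_continuousAt_of_boundedVariationOn (hf : BoundedVariationOn f s)
    (hs : IsOpen s) : {x ∈ s | ¬ContinuousAt f x}.Countable :=
  (antitone_tailVariation hf).countable_not_continuousAt.mono fun _ hx hw =>
    hx.2 (continuousAt_of_continuousAt_tailVariation hf (hs.mem_nhds hx.1) hw)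

theorem stronglyMeasurable_indicator_Ioi_of_boundedVariationOn {a : ℝ}
    (hf : BoundedVariationOn f (Ioi a)) : StronglyMeasurable ((Ioi a).indicator f) := by
  refine StronglyMeasurable.of_countable_not_continuousAt
    (((countable_setOf_not_continuousAt_of_boundedVariationOn hf isOpen_Ioi).insert a).mono
      fun x hx => ?_)
  rcases lt_trichotomy x a with hxa | rfl | hxa
  · refine absurd ((continuousAt_const (y := (0 : E))).congr ?_) hx
    filter_upwards [Iio_mem_nhds hxa] with y hy
    exact (indicator_of_notMem (notMem_Ioi.2 (le_of_lt hy)) f).symm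
  · exact mem_insert _ _
  · refine mem_insert_of_mem _ ⟨hxa, fun hc => hx (hc.congr ?_)⟩
    filter_upwards [Ioi_mem_nhds hxa] with y hy
    exact (indicator_of_mem hy f).symm

theorem tendsto_zero_of_boundedVariationOn_of_lintegral_pow_lt_top [CompleteSpace E] {a : ℝ} {p : ℕ}
    (hf : BoundedVariationOn f (Ioi a)) (hp : ∫⁻ x in Ioi a, ‖f x‖ₑ ^ p < ⊤) :
    Tendsto f atTop (𝓝 0) := by
  obtain ⟨l, hl⟩ := hf.exists_tendsto_atTop
  rw [inf_of_le_right (le_principal_iff.2 (Ioi_mem_atTop a))] at hl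
  suffices l = 0 by rwa [← this]
  by_contra hl0
  obtain ⟨ε, hε, hεl⟩ := exists_between (norm_pos_iff.2 hl0)
  obtain ⟨b, hb⟩ := eventually_atTop.1 (hl.norm.eventually_const_lt hεl)
  refine hp.not_ge ?_
  calc ⊤ = ∫⁻ _ in Ioi (max a b), ENNReal.ofReal ε ^ p := by
        rw [setLIntegral_const, Real.volume_Ioi,
          ENNReal.mul_top (pow_ne_zero _ (by simpa using hε))]
    _ ≤ ∫⁻ x in Ioi (max a b), ‖f x‖ₑ ^ p := by
        refine setLIntegral_mono' measurableSet_Ioi fun x hx => ?_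
        gcongr
        rw [← ofReal_norm]
        exact ENNReal.ofReal_le_ofReal (hb x ((le_max_right a b).trans (le_of_lt hx))).le
    _ ≤ ∫⁻ x in Ioi a, ‖f x‖ₑ ^ p := lintegral_mono_set (Ioi_subset_Ioi (le_max_left a b))

end TailVariation

section AntitoneShift

variable {w : ℝ → ℝ} {a h M : ℝ}

theorem intervalIntegral_sub_shift_le_of_antitone (hw : Antitone w) (hw0 : 0 ≤ w)
    (hM : ∀ x, w x ≤ M) (hh : 0 ≤ h) (b : ℝ) :
    ∫ x in a..b, (w x - w (x + h)) ≤ h * M := by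
  have hint : ∀ c d, IntervalIntegrable w volume c d := fun c d => hw.intervalIntegrable
  have hshift : Antitone fun x => w (x + h) := fun x y hxy => hw (by gcongr)
  calc ∫ x in a..b, (w x - w (x + h))
      = (∫ x in a..(a + h), w x) - ∫ x in b..(b + h), w x := by
        rw [intervalIntegral.integral_sub (hint _ _) hshift.intervalIntegrable,
          intervalIntegral.integral_comp_add_right,
          intervalIntegral.integral_interval_sub_interval_comm (hint _ _) (hint _ _) (hint _ _)]
    _ ≤ ∫ x in a..(a + h), w x :=
        sub_le_self _ (intervalIntegral.integral_nonneg (by linarith) fun x _ => hw0 x)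
    _ ≤ ∫ _ in a..(a + h), M :=
        intervalIntegral.integral_mono_on (by linarith) (hint _ _) (by simp) fun x _ => hM x
    _ = h * M := by simp

theorem lintegral_sub_shift_le_of_antitone (hw : Antitone w) (hw0 : 0 ≤ w) (hM : ∀ x, w x ≤ M)
    (hh : 0 ≤ h) : ∫⁻ x in Ioi a, ENNReal.ofReal (w x - w (x + h)) ≤ ENNReal.ofReal (h * M) := by
  have hnonneg : ∀ x, 0 ≤ w x - w (x + h) := fun x => sub_nonneg.2 (hw (by linarith))
  have hshift : Antitone fun x => w (x + h) := fun x y hxy => hw (by gcongr)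
  have hbound := intervalIntegral_sub_shift_le_of_antitone (a := a) hw hw0 hM hh
  have hint : IntegrableOn (fun x => w x - w (x + h)) (Ioi a) := by
    refine integrableOn_Ioi_of_intervalIntegral_norm_bounded (h * M) a
      (fun b => (hw.intervalIntegrable.sub hshift.intervalIntegrable).1) tendsto_id ?_
    simpa only [id, Real.norm_of_nonneg (hnonneg _)] using Eventually.of_forall hbound
  rw [← ofReal_integral_eq_lintegral_ofReal hint (Eventually.of_forall hnonneg)]
  exact ENNReal.ofReal_le_ofReal
    (le_of_tendsto' (intervalIntegral_tendsto_integral_Ioi a hint tendsto_id) hbound)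

end AntitoneShift

section VariationOnHalfLine

variable {E : Type*} [NormedAddCommGroup E] {f : ℝ → E} (hf : BoundedVariationOn f (Ioi 0))

include hf

theorem norm_indicator_Ioi_le_variation (hf0 : Tendsto f atTop (𝓝 0)) (x : ℝ) :
    ‖(Ioi 0).indicator f x‖ ≤ (eVariationOn f (Ioi 0)).toReal := by
  by_cases hx : x ∈ Ioi (0 : ℝ)
  · rw [indicator_of_mem hx]
    exact (norm_le_tailVariation hf (Ioi_mem_atTop 0) hf0 hx).trans (tailVariation_le hf x)
  · simp [indicator_of_notMem hx]

theorem intervalIntegrable_indicator_Ioi (hf0 : Tendsto f atTop (𝓝 0)) (a b : ℝ) :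
    IntervalIntegrable ((Ioi 0).indicator f) volume a b := by
  refine (intervalIntegrable_const (c := (eVariationOn f (Ioi 0)).toReal)).mono_fun
    (stronglyMeasurable_indicator_Ioi_of_boundedVariationOn hf).aestronglyMeasurable
    (Eventually.of_forall fun x => ?_)
  exact (norm_indicator_Ioi_le_variation hf hf0 x).trans (le_abs_self _)

theorem norm_indicator_Ioi_sub_le_tailVariation_sub {x y b : ℝ} (hx : 0 < x) (hxy : x ≤ y)
    (hyb : y ≤ b) : ‖(Ioi 0).indicator f y - (Ioi 0).indicator f x‖ ≤
      tailVariation f (Ioi 0) x - tailVariation f (Ioi 0) b := by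
  have hy : y ∈ Ioi 0 := hx.trans_le hxy
  rw [indicator_of_mem hy, indicator_of_mem (mem_Ioi.2 hx)]
  exact (norm_sub_le_tailVariation_sub hf hx hy hxy).trans
    (sub_le_sub_left (antitone_tailVariation hf hyb) _)

theorem lintegral_enorm_le_of_norm_le_tailVariation_sub {F : ℝ → E}
    (hF : ∀ x, 0 < x → ‖F x‖ ≤ tailVariation f (Ioi 0) x - tailVariation f (Ioi 0) (x + 2)) :
    ∫⁻ x in Ioi 0, ‖F x‖ₑ ≤ ENNReal.ofReal (2 * (eVariationOn f (Ioi 0)).toReal) := by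
  refine le_trans (setLIntegral_mono' measurableSet_Ioi fun x hx => ?_)
    (lintegral_sub_shift_le_of_antitone (antitone_tailVariation hf)
      (fun x => ENNReal.toReal_nonneg) (tailVariation_le hf) zero_le_two)
  exact (ofReal_norm (F x)).symm.trans_le (ENNReal.ofReal_le_ofReal (hF x hx))

end VariationOnHalfLine

section Smoothing

variable {E : Type*} [NormedAddCommGroup E] [NormedSpace ℝ E]

theorem tendsto_movingAverage_zero {f : ℝ → E} (hf : Tendsto f atTop (𝓝 0)) :
    Tendsto (movingAverage f) atTop (𝓝 0) := by
  refine NormedAddGroup.tendsto_nhds_zero.2 fun ε hε => ?_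
  obtain ⟨b, hb⟩ := eventually_atTop.1 (NormedAddGroup.tendsto_nhds_zero.1 hf (ε / 2) (half_pos hε))
  filter_upwards [Ici_mem_atTop b] with x hx
  refine (norm_movingAverage_le fun t ht => ?_).trans_lt (half_lt_self hε)
  exact (hb (x + t) (le_add_of_le_of_nonneg hx ht.1.le)).le

/-- A continuously differentiable approximation of a function of bounded variation on `(0,∞)`. -/
def smoothing (f : ℝ → E) : ℝ → E := movingAverage (movingAverage ((Ioi 0).indicator f))

/-- The derivative of `smoothing f`. -/
def smoothingDeriv (f : ℝ → E) (x : ℝ) : E :=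
  movingAverage ((Ioi 0).indicator f) (x + 1) - movingAverage ((Ioi 0).indicator f) x

theorem enorm_smoothing_le (f : ℝ → E) (x : ℝ) :
    ‖smoothing f x‖ₑ ≤
      lmovingAverage (lmovingAverage fun y => ‖(Ioi 0).indicator f y‖ₑ) x :=
  (enorm_movingAverage_le _ x).trans (lmovingAverage_mono (enorm_movingAverage_le _) x)

theorem tendsto_smoothing_zero {f : ℝ → E} (hf : Tendsto f atTop (𝓝 0)) :
    Tendsto (smoothing f) atTop (𝓝 0) := by
  refine tendsto_movingAverage_zero (tendsto_movingAverage_zero (hf.congr' ?_))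
  filter_upwards [Ioi_mem_atTop 0] with x hx using (indicator_of_mem hx f).symm

variable {f : ℝ → E} (hf : BoundedVariationOn f (Ioi 0)) (hf0 : Tendsto f atTop (𝓝 0))

include hf hf0

theorem continuous_movingAverage_indicator_Ioi :
    Continuous (movingAverage ((Ioi 0).indicator f)) :=
  continuous_movingAverage (intervalIntegrable_indicator_Ioi hf hf0)

theorem norm_smoothing_le (x : ℝ) : ‖smoothing f x‖ ≤ (eVariationOn f (Ioi 0)).toReal :=
  norm_movingAverage_le fun _ _ => norm_movingAverage_le fun _ _ =>
    norm_indicator_Ioi_le_variation hf hf0 _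

theorem norm_smoothingDeriv_le (x : ℝ) :
    ‖smoothingDeriv f x‖ ≤ 2 * (eVariationOn f (Ioi 0)).toReal := by
  have hbound : ∀ y, ‖movingAverage ((Ioi 0).indicator f) y‖ ≤ (eVariationOn f (Ioi 0)).toReal :=
    fun y => norm_movingAverage_le fun _ _ => norm_indicator_Ioi_le_variation hf hf0 _
  rw [two_mul]
  exact (norm_sub_le _ _).trans (add_le_add (hbound _) (hbound _))

variable [CompleteSpace E]

theorem hasDerivAt_smoothing (x : ℝ) : HasDerivAt (smoothing f) (smoothingDeriv f x) x :=
  hasDerivAt_movingAverage (continuous_movingAverage_indicator_Ioi hf hf0) x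

theorem norm_smoothing_sub_le {x : ℝ} (hx : 0 < x) : ‖smoothing f x - f x‖ ≤
    tailVariation f (Ioi 0) x - tailVariation f (Ioi 0) (x + 2) := by
  rw [← indicator_of_mem (mem_Ioi.2 hx) f]
  refine norm_movingAverage_sub_le (fun _ _ =>
    (continuous_movingAverage_indicator_Ioi hf hf0).intervalIntegrable _ _) fun t ht => ?_
  refine norm_movingAverage_sub_le (intervalIntegrable_indicator_Ioi hf hf0) fun s hs => ?_
  exact norm_indicator_Ioi_sub_le_tailVariation_sub hf hx (by linarith [ht.1, hs.1])
    (by linarith [ht.2, hs.2])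

theorem norm_smoothingDeriv_le_tailVariation_sub {x : ℝ} (hx : 0 < x) : ‖smoothingDeriv f x‖ ≤
    tailVariation f (Ioi 0) x - tailVariation f (Ioi 0) (x + 2) := by
  have hint := intervalIntegrable_indicator_Ioi hf hf0
  refine norm_movingAverage_sub_le hint fun t ht => ?_
  rw [norm_sub_rev]
  refine norm_movingAverage_sub_le hint fun s hs => ?_
  rw [norm_sub_rev]
  refine (norm_indicator_Ioi_sub_le_tailVariation_sub hf (add_pos hx hs.1)
    (by linarith [ht.1, hs.2]) (by linarith [ht.2] : x + 1 + t ≤ x + 2)).trans ?_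
  exact sub_le_sub_right (antitone_tailVariation hf (by linarith [hs.1])) _

theorem lintegral_enorm_smoothing_sub_le : ∫⁻ x in Ioi 0, ‖smoothing f x - f x‖ₑ ≤
    ENNReal.ofReal (2 * (eVariationOn f (Ioi 0)).toReal) :=
  lintegral_enorm_le_of_norm_le_tailVariation_sub hf fun _ => norm_smoothing_sub_le hf hf0

theorem lintegral_enorm_smoothingDeriv_le : ∫⁻ x in Ioi 0, ‖smoothingDeriv f x‖ₑ ≤
    ENNReal.ofReal (2 * (eVariationOn f (Ioi 0)).toReal) :=
  lintegral_enorm_le_of_norm_le_tailVariation_sub hf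
    fun _ => norm_smoothingDeriv_le_tailVariation_sub hf hf0

end Smoothing

section TupleSplit

variable {α : Type*} {a b n : ℕ}

/-- Splitting a nonempty tuple into an initial block, a middle block and its last entry. -/
def tupleSplit (h : a + b = n) : (Fin (n + 1) → α) ≃ (Fin a → α) × (Fin b → α) × α where
  toFun m := (fun i => m ⟨i, by omega⟩, fun i => m ⟨a + i, by omega⟩, m (Fin.last n))
  invFun t := Fin.snoc (α := fun _ => α) (Fin.append t.1 t.2.1 ∘ Fin.cast h.symm) t.2.2
  left_inv m := by
    subst h
    refine funext fun i => Fin.lastCases ?_ (fun j => ?_) i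
    · exact Fin.snoc_last (α := fun _ => α) _ _
    · refine (Fin.snoc_castSucc (α := fun _ => α) _ _ j).trans ?_
      refine Fin.addCases (fun k => ?_) (fun k => ?_) j
      · exact Fin.append_left _ _ k
      · exact Fin.append_right _ _ k
  right_inv t := by
    subst h
    refine Prod.ext (funext fun i => ?_) (Prod.ext (funext fun i => ?_) (by simp))
    · exact (Fin.snoc_castSucc (α := fun _ => α) _ _ (Fin.castAdd b i)).trans
        (Fin.append_left t.1 t.2.1 i)
    · exact (Fin.snoc_castSucc (α := fun _ => α) _ _ (Fin.natAdd a i)).trans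
        (Fin.append_right t.1 t.2.1 i)

theorem prod_tupleSplit {M : Type*} [CommMonoid M] (h : a + b = n) (q : α → M)
    (m : Fin (n + 1) → α) :
    ∏ i, q (m i) = (∏ i, q ((tupleSplit h m).1 i)) *
      ((∏ i, q ((tupleSplit h m).2.1 i)) * q (tupleSplit h m).2.2) := by
  subst h
  rw [Fin.prod_univ_castSucc, Fin.prod_univ_add, mul_assoc]
  rfl

variable {R : Type*} [NormedRing R] {F : (Fin a → α) → R} {G : (Fin b → α) → R} {L : α → R}

theorem summable_norm_mul_tupleSplit (h : a + b = n) (hF : Summable fun x => ‖F x‖)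
    (hG : Summable fun y => ‖G y‖) (hL : Summable fun k => ‖L k‖) :
    Summable fun m : Fin (n + 1) → α =>
      ‖F (tupleSplit h m).1 * (G (tupleSplit h m).2.1 * L (tupleSplit h m).2.2)‖ :=
  (hF.mul_norm (hG.mul_norm hL)).comp_injective (tupleSplit h).injective

theorem tsum_mul_tupleSplit [CompleteSpace R] (h : a + b = n) (hF : Summable fun x => ‖F x‖)
    (hG : Summable fun y => ‖G y‖) (hL : Summable fun k => ‖L k‖) :
    ∑' m : Fin (n + 1) → α,
        F (tupleSplit h m).1 * (G (tupleSplit h m).2.1 * L (tupleSplit h m).2.2) =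
      (∑' x, F x) * ((∑' y, G y) * ∑' k, L k) := by
  rw [tsum_mul_tsum_of_summable_norm hG hL, tsum_mul_tsum_of_summable_norm hF (hG.mul_norm hL)]
  exact (tupleSplit h).tsum_eq fun t => F t.1 * (G t.2.1 * L t.2.2)

end TupleSplit

section HSeries

/-- The value `h_J(η; ψ₁,…,ψ_J)` of the function `hFun` at a tuple. -/
def hTuple (η : ℝ) {J : ℕ} (ψ : Fin J → ℝ) : ℝ :=
  hFun J η fun n => if h : n < J then ψ ⟨n, h⟩ else 0

theorem hFun_congr (η : ℝ) (J : ℕ) {f f' : ℕ → ℝ} (h : ∀ i < J, f i = f' i) :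
    hFun J η f = hFun J η f' := by
  induction J using Nat.strong_induction_on generalizing f f' with
  | _ J ih =>
    cases J with
    | zero => simp only [hFun]
    | succ n =>
      rw [hFun, hFun, Finset.sum_congr rfl fun i hi => h i (Finset.mem_range.1 hi)]
      congr 1
      refine Finset.sum_congr rfl fun j _ => ?_
      have hj := Finset.mem_range.1 j.2
      rw [ih j.1 hj fun i hi => h i (hi.trans hj),
        ih (n - j.1) (by omega) fun i hi => h (i + j.1) (by omega)]

theorem hTuple_zero (η : ℝ) (ψ : Fin 0 → ℝ) : hTuple η ψ = 1 := by
  rw [hTuple, hFun]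

theorem hTuple_succ (η : ℝ) {n : ℕ} (ψ : Fin (n + 1) → ℝ) :
    hTuple η ψ = (η - ∑ i, ψ i)⁻¹ * ∑ j : Fin (n + 1),
      hTuple η (tupleSplit (Nat.add_sub_of_le j.is_le) ψ).1 *
        hTuple η (tupleSplit (Nat.add_sub_of_le j.is_le) ψ).2.1 := by
  set f : ℕ → ℝ := fun i => if h : i < n + 1 then ψ ⟨i, h⟩ else 0 with hf
  rw [hTuple, hFun, Finset.sum_attach (Finset.range (n + 1))
    (fun j => hFun j η f * hFun (n - j) η fun i => f (i + j)), Finset.sum_range,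
    Finset.sum_range]
  congr 1
  · exact congrArg (fun s => (η - s)⁻¹) (Finset.sum_congr rfl fun i _ => dif_pos i.is_lt)
  · refine Finset.sum_congr rfl fun j _ => congrArg₂ _ ?_ ?_
    · refine hFun_congr η j fun i hi => ?_
      rw [hf, dif_pos hi]
      exact dif_pos (hi.trans j.is_lt)
    · refine hFun_congr η (n - j) fun i hi => ?_
      rw [hf, dif_pos hi]
      refine (dif_pos (by omega)).trans (congrArg ψ (Fin.ext (add_comm i j)))

variable {ι : Type*} {η : ℝ} {φ : ι → ℝ} {q : ι → ℂ} {J n : ℕ}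

/-- The term of index `m` of the multiple series `hSeries`. -/
def hMonomial (η : ℝ) (φ : ι → ℝ) (q : ι → ℂ) (m : Fin J → ι) : ℂ :=
  hTuple η (φ ∘ m) * ∏ i, q (m i)

/-- The homogeneous multiple series `∑ h_J(η; φ_{k₁},…,φ_{k_J}) q_{k₁} ⋯ q_{k_J}`. -/
def hSeries (η : ℝ) (φ : ι → ℝ) (J : ℕ) (q : ι → ℂ) : ℂ := ∑' m : Fin J → ι, hMonomial η φ q m

theorem norm_hMonomial (η : ℝ) (φ : ι → ℝ) (q : ι → ℂ) (m : Fin J → ι) :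
    ‖hMonomial η φ q m‖ = ‖∏ i, q (m i)‖ * |hTuple η (φ ∘ m)| := by
  rw [hMonomial, norm_mul, Complex.norm_real, Real.norm_eq_abs, mul_comm]

theorem hSeries_zero (η : ℝ) (φ : ι → ℝ) (q : ι → ℂ) : hSeries η φ 0 q = 1 := by
  simp [hSeries, hMonomial, hTuple_zero]

theorem detuning_mul_hMonomial {m : Fin (n + 1) → ι} (hm : η ≠ ∑ i, φ (m i)) :
    ((η - ∑ i, φ (m i) : ℝ) : ℂ) * hMonomial η φ q m = ∑ j : Fin (n + 1),
      hMonomial η φ q (tupleSplit (Nat.add_sub_of_le j.is_le) m).1 *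
        (hMonomial η φ q (tupleSplit (Nat.add_sub_of_le j.is_le) m).2.1 *
          q (tupleSplit (Nat.add_sub_of_le j.is_le) m).2.2) := by
  have hrec : (η - ∑ i, φ (m i)) * hTuple η (φ ∘ m) = ∑ j : Fin (n + 1),
      hTuple η (φ ∘ (tupleSplit (Nat.add_sub_of_le j.is_le) m).1) *
        hTuple η (φ ∘ (tupleSplit (Nat.add_sub_of_le j.is_le) m).2.1) := by
    rw [hTuple_succ]
    exact mul_inv_cancel_left₀ (sub_ne_zero.2 hm) _
  rw [hMonomial, ← mul_assoc, ← Complex.ofReal_mul, hrec, Complex.ofReal_sum, Finset.sum_mul]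
  refine Finset.sum_congr rfl fun j _ => ?_
  rw [prod_tupleSplit (Nat.add_sub_of_le j.is_le) q m, Complex.ofReal_mul]
  simp only [hMonomial]
  ring

variable (hq : Summable fun k => ‖q k‖)
  (hH : ∀ j ≤ n, Summable fun m : Fin j → ι => ‖hMonomial η φ q m‖)
  (hres : ∀ m : Fin (n + 1) → ι, η ≠ ∑ i, φ (m i))

include hq hH hres

theorem summable_norm_detuning_mul_hMonomial :
    Summable fun m : Fin (n + 1) → ι =>
      ‖((η - ∑ i, φ (m i) : ℝ) : ℂ) * hMonomial η φ q m‖ := by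
  simp only [detuning_mul_hMonomial (hres _)]
  refine .of_nonneg_of_le (fun _ => norm_nonneg _) (fun _ => norm_sum_le _ _)
    (summable_sum fun j _ => ?_)
  exact summable_norm_mul_tupleSplit _ (hH j j.is_le) (hH (n - j) (Nat.sub_le n j)) hq

theorem tsum_detuning_mul_hMonomial :
    ∑' m : Fin (n + 1) → ι, ((η - ∑ i, φ (m i) : ℝ) : ℂ) * hMonomial η φ q m =
      (∑ j ∈ Finset.range (n + 1), hSeries η φ j q * hSeries η φ (n - j) q) * ∑' k, q k := by
  simp only [detuning_mul_hMonomial (hres _)]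
  rw [Finset.sum_range, Finset.sum_mul]
  refine (Summable.tsum_finsetSum fun (j : Fin (n + 1)) _ =>
    (summable_norm_mul_tupleSplit _ (hH j j.is_le)
      (hH (n - j) (Nat.sub_le n j)) hq).of_norm).trans (Finset.sum_congr rfl fun j _ => ?_)
  rw [tsum_mul_tupleSplit _ (hH j j.is_le) (hH (n - j) (Nat.sub_le n j)) hq, mul_assoc]
  rfl

end HSeries

theorem integrable_tsum_of_lintegral_enorm_le {ι X E F : Type*} [Countable ι] [MeasurableSpace X]
    {μ : Measure X} [NormedAddCommGroup E] [CompleteSpace E] [SecondCountableTopology E]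
    [SeminormedAddGroup F] {f : ι → X → E} {a : ι → F} {C : ℝ≥0∞}
    (hf : ∀ i, AEStronglyMeasurable (f i) μ) (ha : Summable fun i => ‖a i‖) (hC : C ≠ ⊤)
    (h : ∀ i, ∫⁻ x, ‖f i x‖ₑ ∂μ ≤ ‖a i‖ₑ * C) :
    Integrable (fun x => ∑' i, f i x) μ := by
  have ha' : ∑' i, ‖a i‖ₑ ≠ ⊤ := by simpa only [ofReal_norm] using ha.tsum_ofReal_ne_top
  refine ⟨AEStronglyMeasurable.tsum hf, ?_⟩
  calc ∫⁻ x, ‖∑' i, f i x‖ₑ ∂μ ≤ ∫⁻ x, ∑' i, ‖f i x‖ₑ ∂μ :=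
        lintegral_mono fun x => enorm_tsum_le_tsum_enorm
    _ = ∑' i, ∫⁻ x, ‖f i x‖ₑ ∂μ := lintegral_tsum fun i => (hf i).enorm
    _ ≤ ∑' i, ‖a i‖ₑ * C := ENNReal.tsum_le_tsum h
    _ = (∑' i, ‖a i‖ₑ) * C := ENNReal.tsum_mul_right
    _ < ⊤ := ENNReal.mul_lt_top ha'.lt_top hC.lt_top

section HSeriesBounds

variable {ι : Type*} {η M : ℝ} {φ : ι → ℝ} {q e c : ι → ℂ} {J : ℕ}

/-- The differential of `q ↦ hMonomial η φ q m` in the direction `e`. -/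
def hMonomialDeriv (η : ℝ) (φ : ι → ℝ) (q e : ι → ℂ) (m : Fin J → ι) : ℂ :=
  hTuple η (φ ∘ m) * ∑ i, (∏ j ∈ Finset.univ.erase i, q (m j)) * e (m i)

/-- The differential of `q ↦ hSeries η φ J q` in the direction `e`. -/
def hSeriesDeriv (η : ℝ) (φ : ι → ℝ) (J : ℕ) (q e : ι → ℂ) : ℂ :=
  ∑' m : Fin J → ι, hMonomialDeriv η φ q e m

theorem norm_prod_le_prod_mul_pow (hq : ∀ k, ‖q k‖ ≤ ‖c k‖ * M) (m : Fin J → ι)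
    (s : Finset (Fin J)) : ‖∏ i ∈ s, q (m i)‖ ≤ ‖∏ i ∈ s, c (m i)‖ * M ^ s.card := by
  rw [norm_prod, norm_prod, ← Finset.prod_const, ← Finset.prod_mul_distrib]
  exact Finset.prod_le_prod (fun i _ => norm_nonneg _) fun i _ => hq (m i)

theorem norm_hMonomial_le (hq : ∀ k, ‖q k‖ ≤ ‖c k‖ * M) (m : Fin J → ι) :
    ‖hMonomial η φ q m‖ ≤ ‖hMonomial η φ c m‖ * M ^ J := by
  have hprod := norm_prod_le_prod_mul_pow hq m Finset.univ
  rw [Finset.card_fin] at hprod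
  rw [hMonomial, hMonomial, norm_mul, norm_mul, mul_assoc]
  gcongr

theorem norm_mul_hMonomial_le (δ : ℂ) (hq : ∀ k, ‖q k‖ ≤ ‖c k‖ * M) (m : Fin J → ι) :
    ‖δ * hMonomial η φ q m‖ ≤ ‖δ * hMonomial η φ c m‖ * M ^ J := by
  rw [norm_mul, norm_mul, mul_assoc]
  exact mul_le_mul_of_nonneg_left (norm_hMonomial_le hq m) (norm_nonneg _)

theorem norm_hSeries_le (hH : Summable fun m : Fin J → ι => ‖hMonomial η φ c m‖)
    (hq : ∀ k, ‖q k‖ ≤ ‖c k‖ * M) :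
    ‖hSeries η φ J q‖ ≤ (∑' m : Fin J → ι, ‖hMonomial η φ c m‖) * M ^ J :=
  tsum_of_norm_bounded (hH.hasSum.mul_right _) (norm_hMonomial_le hq)

theorem norm_hMonomialDeriv_le {B : ι → ℝ} (hq : ∀ k, ‖q k‖ ≤ ‖c k‖ * M)
    (he : ∀ k, ‖e k‖ ≤ ‖c k‖ * B k) (m : Fin J → ι) :
    ‖hMonomialDeriv η φ q e m‖ ≤ ‖hMonomial η φ c m‖ * M ^ (J - 1) * ∑ i, B (m i) := by
  have hterm : ∀ i, ‖(∏ j ∈ Finset.univ.erase i, q (m j)) * e (m i)‖ ≤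
      ‖∏ j, c (m j)‖ * M ^ (J - 1) * B (m i) := fun i => by
    have hprod := norm_prod_le_prod_mul_pow hq m (Finset.univ.erase i)
    rw [Finset.card_erase_of_mem (Finset.mem_univ i), Finset.card_fin] at hprod
    rw [norm_mul, ← Finset.prod_erase_mul Finset.univ (fun j => c (m j)) (Finset.mem_univ i),
      norm_mul]
    refine (mul_le_mul hprod (he (m i)) (norm_nonneg _)
      ((norm_nonneg _).trans hprod)).trans_eq ?_
    ring
  rw [hMonomialDeriv, hMonomial, norm_mul, norm_mul, mul_assoc, mul_assoc, ← mul_assoc ‖∏ i, _‖,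
    Finset.mul_sum]
  gcongr
  exact (norm_sum_le _ _).trans (Finset.sum_le_sum fun i _ => hterm i)

theorem integrable_hSeriesDeriv [Countable ι] {X : Type*} [MeasurableSpace X] {μ : Measure X}
    {q e : X → ι → ℂ} {B : X → ι → ℝ} {K : ℝ≥0∞}
    (hH : Summable fun m : Fin J → ι => ‖hMonomial η φ c m‖)
    (hq : ∀ x k, ‖q x k‖ ≤ ‖c k‖ * M) (he : ∀ x k, ‖e x k‖ ≤ ‖c k‖ * B x k)
    (hqm : ∀ k, AEStronglyMeasurable (fun x => q x k) μ)
    (hem : ∀ k, AEStronglyMeasurable (fun x => e x k) μ)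
    (hBm : ∀ k, AEMeasurable (fun x => B x k) μ) (hB : ∀ k, ∫⁻ x, ‖B x k‖ₑ ∂μ ≤ K) (hK : K ≠ ⊤) :
    Integrable (fun x => hSeriesDeriv η φ J (q x) (e x)) μ := by
  refine integrable_tsum_of_lintegral_enorm_le (C := ‖M ^ (J - 1)‖ₑ * (J * K)) (fun m => ?_) hH
    (ENNReal.mul_ne_top enorm_ne_top (ENNReal.mul_ne_top (ENNReal.natCast_ne_top J) hK))
    fun m => ?_
  · exact (Finset.aestronglyMeasurable_fun_sum _ fun i _ =>
      (Finset.aestronglyMeasurable_fun_prod _ fun j _ => hqm (m j)).mul (hem (m i))).const_mul _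
  · calc ∫⁻ x, ‖hMonomialDeriv η φ (q x) (e x) m‖ₑ ∂μ
        ≤ ∫⁻ x, ‖hMonomial η φ c m‖ₑ * ‖M ^ (J - 1)‖ₑ * ∑ i, ‖B x (m i)‖ₑ ∂μ := by
          refine lintegral_mono fun x => ?_
          refine (enorm_le_iff_norm_le.2 ((norm_hMonomialDeriv_le (hq x) (he x) m).trans
            (Real.le_norm_self _))).trans ?_
          rw [enorm_mul, enorm_mul, enorm_norm]
          gcongr
          exact enorm_sum_le _ _
      _ = ‖hMonomial η φ c m‖ₑ * ‖M ^ (J - 1)‖ₑ * ∑ i, ∫⁻ x, ‖B x (m i)‖ₑ ∂μ := by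
          rw [lintegral_const_mul' _ _ (ENNReal.mul_ne_top enorm_ne_top enorm_ne_top),
            lintegral_finsetSum' _ fun i _ => (hBm (m i)).enorm]
      _ ≤ ‖hMonomial η φ c m‖ₑ * (‖M ^ (J - 1)‖ₑ * (J * K)) := by
          rw [mul_assoc]
          gcongr
          refine (Finset.sum_le_card_nsmul _ _ K fun i _ => hB (m i)).trans_eq ?_
          simp

end HSeriesBounds

section HSeriesCalculus

variable {ι : Type*} {η M : ℝ} {φ : ι → ℝ} {q e : ℝ → ι → ℂ} {c : ι → ℂ} {J n : ℕ}

theorem hasDerivAt_hMonomial {x : ℝ} (m : Fin J → ι)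
    (hqe : ∀ k, HasDerivAt (fun y => q y k) (-Complex.I * φ k * q x k + e x k) x) :
    HasDerivAt (fun y => hMonomial η φ (q y) m)
      (-Complex.I * (∑ i, φ (m i) : ℝ) * hMonomial η φ (q x) m +
        hMonomialDeriv η φ (q x) (e x) m) x := by
  refine ((HasDerivAt.fun_finsetProd fun i _ => hqe (m i)).const_mul _).congr_deriv ?_
  simp only [hMonomial, hMonomialDeriv, smul_eq_mul, mul_add, Finset.sum_add_distrib,
    Complex.ofReal_sum]
  congr 1
  simp only [Finset.mul_sum, Finset.sum_mul]
  refine Finset.sum_congr rfl fun i _ => ?_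
  rw [← Finset.prod_erase_mul Finset.univ (fun j => q x (m j)) (Finset.mem_univ i)]
  ring

theorem tendsto_hSeries_succ_zero {l : Filter ℝ}
    (hH : Summable fun m : Fin (n + 1) → ι => ‖hMonomial η φ c m‖)
    (hq : ∀ x k, ‖q x k‖ ≤ ‖c k‖ * M) (hq0 : ∀ k, Tendsto (fun x => q x k) l (𝓝 0)) :
    Tendsto (fun x => hSeries η φ (n + 1) (q x)) l (𝓝 0) := by
  rw [← tsum_zero (β := Fin (n + 1) → ι)]
  refine tendsto_tsum_of_dominated_convergence (hH.mul_right (M ^ (n + 1))) (fun m => ?_)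
    (Eventually.of_forall fun x m => norm_hMonomial_le (hq x) m)
  have hprod := tendsto_finsetProd Finset.univ fun i _ => hq0 (m i)
  simpa [hMonomial] using hprod.const_mul (hTuple η (φ ∘ m) : ℂ)

section Deriv

variable (hc : Summable fun k => ‖c k‖)
  (hH : ∀ j ≤ n + 1, Summable fun m : Fin j → ι => ‖hMonomial η φ c m‖)
  (hres : ∀ m : Fin (n + 1) → ι, η ≠ ∑ i, φ (m i))
  (hqe : ∀ x k, HasDerivAt (fun y => q y k) (-Complex.I * φ k * q x k + e x k) x)
  (hq : ∀ x k, ‖q x k‖ ≤ ‖c k‖ * M) (he : ∀ x k, ‖e x k‖ ≤ ‖c k‖ * M)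

include hc hH hres hqe hq he

/-- The recursion for `h_J` enters here: it turns the frequency `∑ φ` of each term into `η` minus
the detuning, and the detuned series is a product of series of lower order. -/
theorem hasDerivAt_hSeries_succ (x : ℝ) :
    HasDerivAt (fun y => hSeries η φ (n + 1) (q y))
      (-Complex.I * η * hSeries η φ (n + 1) (q x) +
        Complex.I * ((∑ j ∈ Finset.range (n + 1),
          hSeries η φ j (q x) * hSeries η φ (n - j) (q x)) * ∑' k, q x k) +
        hSeriesDeriv η φ (n + 1) (q x) (e x)) x := by
  set δ : (Fin (n + 1) → ι) → ℂ := fun m => ((η - ∑ i, φ (m i) : ℝ) : ℂ) with hδ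
  have hHx : ∀ j ≤ n + 1, Summable fun m : Fin j → ι => ‖hMonomial η φ (q x) m‖ := fun j hj =>
    .of_nonneg_of_le (fun _ => norm_nonneg _) (norm_hMonomial_le (hq x)) ((hH j hj).mul_right _)
  have hqx : Summable fun k => ‖q x k‖ :=
    .of_nonneg_of_le (fun _ => norm_nonneg _) (hq x) (hc.mul_right M)
  have hbη := ((hH _ le_rfl).of_norm.mul_left (-Complex.I * η)).norm.mul_right (M ^ (n + 1))
  have hbδ := ((summable_norm_detuning_mul_hMonomial hc (fun j hj => hH j (by omega))
    hres).of_norm.mul_left Complex.I).norm.mul_right (M ^ (n + 1))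
  simp only [← mul_assoc Complex.I] at hbδ
  have hbe := ((hH _ le_rfl).mul_right (M ^ n)).mul_right (∑ _i : Fin (n + 1), M)
  have hsum := hasDerivAt_tsum ((hbη.add hbδ).add hbe)
    (fun m y => (hasDerivAt_hMonomial m (hqe y)).congr_deriv
      (g' := -Complex.I * η * hMonomial η φ (q y) m + Complex.I * δ m * hMonomial η φ (q y) m +
        hMonomialDeriv η φ (q y) (e y) m) (by simp only [hδ, Complex.ofReal_sub]; ring))
    (fun m y => norm_add₃_le.trans (add_le_add_three (norm_mul_hMonomial_le _ (hq y) m)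
      (norm_mul_hMonomial_le _ (hq y) m) (norm_hMonomialDeriv_le (hq y) (he y) m)))
    (hHx _ le_rfl).of_norm x
  refine hsum.congr_deriv ?_
  have hsη := Summable.of_norm_bounded hbη (norm_mul_hMonomial_le _ (hq x))
  have hsδ := Summable.of_norm_bounded hbδ fun m => norm_mul_hMonomial_le _ (hq x) m
  have hse := Summable.of_norm_bounded hbe (norm_hMonomialDeriv_le (hq x) (he x))
  rw [(hsη.add hsδ).tsum_add hse, hsη.tsum_add hsδ]
  simp only [mul_assoc Complex.I, tsum_mul_left,
    tsum_detuning_mul_hMonomial hqx (fun j hj => hHx j (by omega)) hres]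
  rfl

end Deriv

end HSeriesCalculus

section SmoothAmplitudes

/-- Smooth amplitudes `g k`, with derivatives `g' k`, for which the truncated expansion of the
Riccati equation has an integrable error: they vanish at infinity, are dominated by a single
bounded function `σ` with integrable `p`-th power, and have variation at most `M`. -/
structure SmoothAmplitudes {ι : Type*} (p : ℕ) (M : ℝ) (g g' : ι → ℝ → ℂ) (σ : ℝ → ℝ) : Prop where
  hasDerivAt : ∀ k x, HasDerivAt (g k) (g' k x) x
  tendsto_zero : ∀ k, Tendsto (g k) atTop (𝓝 0)
  norm_le : ∀ k x, ‖g k x‖ ≤ σ x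
  norm_deriv_le : ∀ k x, ‖g' k x‖ ≤ M
  lintegral_deriv_le : ∀ k, ∫⁻ x in Ioi 0, ‖g' k x‖ₑ ≤ ENNReal.ofReal M
  dominant_nonneg : ∀ x, 0 ≤ σ x
  dominant_le : ∀ x, σ x ≤ M
  integrable_dominant_pow : IntegrableOn (fun x => σ x ^ p) (Ioi 0)

variable {ι : Type*} [Countable ι] {γ : ι → ℝ → ℂ} {p : ℕ}

theorem lintegral_iSup_enorm_smoothing_pow_le (hγ : ∀ k, BoundedVariationOn (γ k) (Ioi 0))
    (hp : p ≠ 0) :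
    ∫⁻ x in Ioi 0, (⨆ k, ‖smoothing (γ k) x‖ₑ) ^ p ≤ ∫⁻ x in Ioi 0, (⨆ k, ‖γ k x‖ₑ) ^ p := by
  set F : ℝ → ℝ≥0∞ := fun x => ⨆ k, ‖(Ioi 0).indicator (γ k) x‖ₑ
  have hF : Measurable F :=
    .iSup fun k => (stronglyMeasurable_indicator_Ioi_of_boundedVariationOn (hγ k)).enorm
  have hle : ∀ x, ⨆ k, ‖smoothing (γ k) x‖ₑ ≤ lmovingAverage (lmovingAverage F) x := fun x =>
    iSup_le fun k => (enorm_smoothing_le (γ k) x).trans (lmovingAverage_mono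
      (lmovingAverage_mono fun y => le_iSup (fun k => ‖(Ioi 0).indicator (γ k) y‖ₑ) k) x)
  calc ∫⁻ x in Ioi 0, (⨆ k, ‖smoothing (γ k) x‖ₑ) ^ p
      ≤ ∫⁻ x in Ioi 0, lmovingAverage (lmovingAverage F) x ^ p :=
        lintegral_mono fun x => pow_le_pow_left' (hle x) p
    _ ≤ ∫⁻ x in Ioi 0, lmovingAverage F x ^ p :=
        lintegral_lmovingAverage_pow_le (measurable_lmovingAverage hF) hp 0
    _ ≤ ∫⁻ x in Ioi 0, F x ^ p := lintegral_lmovingAverage_pow_le hF hp 0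
    _ = ∫⁻ x in Ioi 0, (⨆ k, ‖γ k x‖ₑ) ^ p :=
        setLIntegral_congr_fun measurableSet_Ioi fun x hx => by
          simp only [F, indicator_of_mem hx]

theorem exists_smoothAmplitudes (hγ : ⨆ k, eVariationOn (γ k) (Ioi 0) < ⊤)
    (hLp : ∫⁻ x in Ioi 0, (⨆ k, ‖γ k x‖ₑ) ^ p < ⊤) :
    ∃ M g g' σ, SmoothAmplitudes p M g g' σ ∧
      ∀ k, ∫⁻ x in Ioi 0, ‖g k x - γ k x‖ₑ ≤ ENNReal.ofReal M := by
  have hp : p ≠ 0 := by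
    rintro rfl
    simp at hLp
  have hvar : ∀ k, eVariationOn (γ k) (Ioi 0) ≤ ⨆ k, eVariationOn (γ k) (Ioi 0) := fun k =>
    le_iSup (fun k => eVariationOn (γ k) (Ioi 0)) k
  have hγ' : ∀ k, BoundedVariationOn (γ k) (Ioi 0) := fun k => ((hvar k).trans_lt hγ).ne
  set N := (⨆ k, eVariationOn (γ k) (Ioi 0)).toReal
  have hN : ∀ k, (eVariationOn (γ k) (Ioi 0)).toReal ≤ N := fun k =>
    ENNReal.toReal_mono hγ.ne (hvar k)
  have hγ0 : ∀ k, Tendsto (γ k) atTop (𝓝 0) := fun k =>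
    tendsto_zero_of_boundedVariationOn_of_lintegral_pow_lt_top (hγ' k)
      ((lintegral_mono fun x => pow_le_pow_left' (le_iSup (fun k => ‖γ k x‖ₑ) k) p).trans_lt hLp)
  have hderiv : ∀ k x, HasDerivAt (smoothing (γ k)) (smoothingDeriv (γ k) x) x := fun k =>
    hasDerivAt_smoothing (hγ' k) (hγ0 k)
  have hsup : ∀ x, ⨆ k, ‖smoothing (γ k) x‖ₑ ≤ ENNReal.ofReal N := fun x => iSup_le fun k =>
    (ofReal_norm _).symm.trans_le (ENNReal.ofReal_le_ofReal
      ((norm_smoothing_le (hγ' k) (hγ0 k) x).trans (hN k)))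
  have hm : Measurable fun x => ⨆ k, ‖smoothing (γ k) x‖ₑ := .iSup fun k =>
    (continuous_iff_continuousAt.2 fun x => (hderiv k x).continuousAt).measurable.enorm
  refine ⟨2 * N, fun k => smoothing (γ k), fun k => smoothingDeriv (γ k),
    fun x => (⨆ k, ‖smoothing (γ k) x‖ₑ).toReal,
    ⟨hderiv, fun k => tendsto_smoothing_zero (hγ0 k), fun k x => ?_, fun k x => ?_, fun k => ?_,
      fun x => ENNReal.toReal_nonneg, fun x => ?_, ?_⟩, fun k => ?_⟩
  · rw [← toReal_enorm]
    exact ENNReal.toReal_mono (ne_top_of_le_ne_top ENNReal.ofReal_ne_top (hsup x))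
      (le_iSup (fun k => ‖smoothing (γ k) x‖ₑ) k)
  · exact (norm_smoothingDeriv_le (hγ' k) (hγ0 k) x).trans (by linarith [hN k])
  · exact (lintegral_enorm_smoothingDeriv_le (hγ' k) (hγ0 k)).trans
      (ENNReal.ofReal_le_ofReal (by linarith [hN k]))
  · exact (ENNReal.toReal_le_of_le_ofReal ENNReal.toReal_nonneg (hsup x)).trans
      (by linarith [show 0 ≤ N from ENNReal.toReal_nonneg])
  · simp only [← ENNReal.toReal_pow]
    exact integrable_toReal_of_lintegral_ne_top (hm.pow_const p).aemeasurable
      ((lintegral_iSup_enorm_smoothing_pow_le hγ' hp).trans_lt hLp).ne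
  · exact (lintegral_enorm_smoothing_sub_le (hγ' k) (hγ0 k)).trans
      (ENNReal.ofReal_le_ofReal (by linarith [hN k]))

end SmoothAmplitudes

section OscTerm

variable {ι : Type*} {c : ι → ℂ} {φ : ι → ℝ} {g g' : ι → ℝ → ℂ}

/-- The oscillatory term `c_k e^{-iφ_k x} g_k(x)`, as a family indexed by `k` for each `x`. -/
def oscTerm (c : ι → ℂ) (φ : ι → ℝ) (g : ι → ℝ → ℂ) (x : ℝ) (k : ι) : ℂ :=
  c k * Complex.exp (-Complex.I * φ k * x) * g k x

theorem norm_oscTerm (x : ℝ) (k : ι) : ‖oscTerm c φ g x k‖ = ‖c k‖ * ‖g k x‖ := by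
  have hexp : ‖Complex.exp (-Complex.I * φ k * x)‖ = 1 := by
    rw [show -Complex.I * φ k * x = ((-(φ k * x) : ℝ) : ℂ) * Complex.I by push_cast; ring,
      Complex.norm_exp_ofReal_mul_I]
  rw [oscTerm, norm_mul, norm_mul, hexp, mul_one]

theorem norm_oscTerm_le {B : ℝ} {x : ℝ} (hg : ∀ k, ‖g k x‖ ≤ B) (k : ι) :
    ‖oscTerm c φ g x k‖ ≤ ‖c k‖ * B := by
  rw [norm_oscTerm]
  exact mul_le_mul_of_nonneg_left (hg k) (norm_nonneg _)

theorem hasDerivAt_oscTerm {x : ℝ} {k : ι} (hg : HasDerivAt (g k) (g' k x) x) :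
    HasDerivAt (fun y => oscTerm c φ g y k)
      (-Complex.I * φ k * oscTerm c φ g x k + oscTerm c φ g' x k) x := by
  have hphase : HasDerivAt (fun y : ℝ => -Complex.I * φ k * y) (-Complex.I * φ k * 1) x :=
    Complex.ofRealCLM.hasDerivAt.const_mul _
  refine ((hphase.cexp.const_mul (c k)).mul hg).congr_deriv ?_
  simp only [oscTerm]
  ring

theorem norm_tsum_oscTerm_le {B : ℝ} {x : ℝ} (hc : Summable fun k => ‖c k‖)
    (hg : ∀ k, ‖g k x‖ ≤ B) : ‖∑' k, oscTerm c φ g x k‖ ≤ (∑' k, ‖c k‖) * B :=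
  tsum_of_norm_bounded (hc.hasSum.mul_right B) (norm_oscTerm_le hg)

end OscTerm

theorem sq_sum_range_succ {R : Type*} [CommSemiring R] (f : ℕ → R) (n : ℕ) :
    (∑ a ∈ Finset.range (n + 1), f a) ^ 2 =
      (∑ k ∈ Finset.range n, ∑ j ∈ Finset.range (k + 1), f j * f (k - j)) +
        ∑ a ∈ Finset.range (n + 1), ∑ b ∈ Finset.Ico (n - a) (n + 1), f a * f b := by
  have htri : ∑ a ∈ Finset.range n, ∑ b ∈ Finset.range (n - a), f a * f b =
      ∑ a ∈ Finset.range (n + 1), ∑ b ∈ Finset.range (n - a), f a * f b := by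
    simp [Finset.sum_range_succ]
  rw [Finset.sum_range_diag_flip n fun a b => f a * f b, sq, Finset.sum_mul_sum, htri,
    ← Finset.sum_add_distrib]
  exact Finset.sum_congr rfl fun a _ => (Finset.sum_range_add_sum_Ico _ (by omega)).symm

section RiccatiExpansion

variable {ι : Type*} {η : ℝ} {φ : ι → ℝ} {n : ℕ}

/-- The term of order `J` in the expansion of the solution of the Riccati equation whose potential
is the sum of the `q k`. -/
def riccatiTerm (η : ℝ) (φ : ι → ℝ) (J : ℕ) (q : ι → ℂ) : ℂ := (η : ℂ)⁻¹ ^ J * hSeries η φ J q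

/-- The expansion of the solution of the Riccati equation up to order `n`. -/
def riccatiExpansion (η : ℝ) (φ : ι → ℝ) (n : ℕ) (q : ι → ℂ) : ℂ :=
  ∑ J ∈ Finset.range (n + 1), riccatiTerm η φ J q

/-- The derivative of `riccatiTerm η φ (n + 1)` along a family `q` with `q_k' = -iφ_k q_k + e_k`. -/
def riccatiTermDeriv (η : ℝ) (φ : ι → ℝ) (n : ℕ) (q e : ι → ℂ) : ℂ :=
  -Complex.I * η * riccatiTerm η φ (n + 1) q +
    Complex.I * (η : ℂ)⁻¹ * ((∑ j ∈ Finset.range (n + 1),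
      riccatiTerm η φ j q * riccatiTerm η φ (n - j) q) * ∑' k, q k) +
    (η : ℂ)⁻¹ ^ (n + 1) * hSeriesDeriv η φ (n + 1) q e

/-- The derivative of `riccatiExpansion η φ n` along a family `q` with
`q_k' = -iφ_k q_k + e_k`. -/
def riccatiExpansionDeriv (η : ℝ) (φ : ι → ℝ) (n : ℕ) (q e : ι → ℂ) : ℂ :=
  ∑ J ∈ Finset.range n, riccatiTermDeriv η φ J q e

theorem riccatiTerm_zero (q : ι → ℂ) : riccatiTerm η φ 0 q = 1 := by
  rw [riccatiTerm, hSeries_zero, pow_zero, mul_one]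

theorem riccatiExpansion_eq_sum_add_one (q : ι → ℂ) :
    riccatiExpansion η φ n q = (∑ J ∈ Finset.range n, riccatiTerm η φ (J + 1) q) + 1 := by
  rw [riccatiExpansion, Finset.sum_range_succ', riccatiTerm_zero]

/-- The three parts of the defect are small for different reasons: the first because the remaining
potential is integrable, the second because its terms have degree greater than `n` in `q`, the
third because `e` is integrable. -/
theorem riccatiDefect_riccatiExpansion (V : ℝ) (q e : ι → ℂ) :
    riccatiDefect η V (riccatiExpansion η φ n q) (riccatiExpansionDeriv η φ n q e) =
      -Complex.I * (η : ℂ)⁻¹ * (riccatiExpansion η φ n q ^ 2 * (V - ∑' k, q k)) +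
      -Complex.I * (η : ℂ)⁻¹ * (∑ a ∈ Finset.range (n + 1), ∑ b ∈ Finset.Ico (n - a) (n + 1),
        riccatiTerm η φ a q * riccatiTerm η φ b q * ∑' k, q k) +
      ∑ J ∈ Finset.range n, (η : ℂ)⁻¹ ^ (J + 1) * hSeriesDeriv η φ (J + 1) q e := by
  have hsq : riccatiExpansion η φ n q ^ 2 = _ :=
    sq_sum_range_succ (fun J => riccatiTerm η φ J q) n
  have hlin := riccatiExpansion_eq_sum_add_one (η := η) (φ := φ) (n := n) q
  simp only [riccatiDefect, riccatiExpansionDeriv, riccatiTermDeriv, Finset.sum_add_distrib,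
    ← Finset.mul_sum, ← Finset.sum_mul] at hsq hlin ⊢
  rw [div_eq_mul_inv]
  linear_combination -(Complex.I * (η : ℂ)⁻¹ * ∑' k, q k) * hsq + Complex.I * η * hlin

theorem hasDerivAt_riccatiTerm_succ {q e : ℝ → ι → ℂ} {x : ℝ} (h : HasDerivAt
      (fun y => hSeries η φ (n + 1) (q y)) (-Complex.I * η * hSeries η φ (n + 1) (q x) +
        Complex.I * ((∑ j ∈ Finset.range (n + 1),
          hSeries η φ j (q x) * hSeries η φ (n - j) (q x)) * ∑' k, q x k) +
        hSeriesDeriv η φ (n + 1) (q x) (e x)) x) :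
    HasDerivAt (fun y => riccatiTerm η φ (n + 1) (q y)) (riccatiTermDeriv η φ n (q x) (e x)) x := by
  have hdiag : ∑ j ∈ Finset.range (n + 1), riccatiTerm η φ j (q x) * riccatiTerm η φ (n - j) (q x) =
      (η : ℂ)⁻¹ ^ n * ∑ j ∈ Finset.range (n + 1),
        hSeries η φ j (q x) * hSeries η φ (n - j) (q x) := by
    rw [Finset.mul_sum]
    refine Finset.sum_congr rfl fun j hj => ?_
    rw [riccatiTerm, riccatiTerm, mul_mul_mul_comm,
      pow_mul_pow_sub _ (Nat.lt_succ_iff.1 (Finset.mem_range.1 hj))]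
  refine (h.const_mul ((η : ℂ)⁻¹ ^ (n + 1))).congr_deriv ?_
  rw [riccatiTermDeriv, hdiag, riccatiTerm, pow_succ]
  ring

end RiccatiExpansion

namespace SmoothAmplitudes

variable {ι : Type*} {p n : ℕ} {η M : ℝ} {c : ι → ℂ} {φ : ι → ℝ} {g g' : ι → ℝ → ℂ} {σ : ℝ → ℝ}

theorem norm_le_bound (hg : SmoothAmplitudes p M g g' σ) (k : ι) (x : ℝ) : ‖g k x‖ ≤ M :=
  (hg.norm_le k x).trans (hg.dominant_le x)

theorem continuous_oscTerm (hg : SmoothAmplitudes p M g g' σ) (k : ι) :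
    Continuous fun x => oscTerm c φ g x k :=
  continuous_iff_continuousAt.2 fun x => (hasDerivAt_oscTerm (hg.hasDerivAt k x)).continuousAt

theorem continuous_tsum_oscTerm (hg : SmoothAmplitudes p M g g' σ)
    (hc : Summable fun k => ‖c k‖) : Continuous fun x => ∑' k, oscTerm c φ g x k :=
  continuous_tsum hg.continuous_oscTerm (hc.mul_right M) fun k x =>
    norm_oscTerm_le (fun k => hg.norm_le_bound k x) k

theorem tendsto_oscTerm_zero (hg : SmoothAmplitudes p M g g' σ) (k : ι) :
    Tendsto (fun x => oscTerm c φ g x k) atTop (𝓝 0) := by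
  rw [tendsto_zero_iff_norm_tendsto_zero]
  simpa only [norm_oscTerm, norm_zero, mul_zero] using (hg.tendsto_zero k).norm.const_mul ‖c k‖

theorem aestronglyMeasurable_deriv (hg : SmoothAmplitudes p M g g' σ) (k : ι) :
    AEStronglyMeasurable (g' k) (volume.restrict (Ioi 0)) := by
  rw [show g' k = deriv (g k) from funext fun x => (hg.hasDerivAt k x).deriv.symm]
  exact (stronglyMeasurable_deriv (g k)).aestronglyMeasurable

theorem dominant_pow_le (hg : SmoothAmplitudes p M g g' σ) {m : ℕ} (hpm : p ≤ m) (x : ℝ) :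
    σ x ^ m ≤ M ^ (m - p) * σ x ^ p := by
  rw [← pow_sub_mul_pow (σ x) hpm]
  exact mul_le_mul_of_nonneg_right (pow_le_pow_left₀ (hg.dominant_nonneg x) (hg.dominant_le x) _)
    (pow_nonneg (hg.dominant_nonneg x) p)

theorem integrableOn_of_norm_le_dominant_pow (hg : SmoothAmplitudes p M g g' σ) {F : ℝ → ℂ}
    (hF : Continuous F) {m : ℕ} (hpm : p ≤ m) {C : ℝ} (hC : 0 ≤ C)
    (h : ∀ x, ‖F x‖ ≤ C * σ x ^ m) : IntegrableOn F (Ioi 0) :=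
  (hg.integrable_dominant_pow.const_mul (C * M ^ (m - p))).mono' hF.aestronglyMeasurable
    (Eventually.of_forall fun x => (h x).trans (by
      rw [mul_assoc]
      exact mul_le_mul_of_nonneg_left (hg.dominant_pow_le hpm x) hC))

theorem norm_riccatiTerm_le (hg : SmoothAmplitudes p M g g' σ) {J : ℕ}
    (hH : Summable fun m : Fin J → ι => ‖hMonomial η φ c m‖) (x : ℝ) :
    ‖riccatiTerm η φ J (oscTerm c φ g x)‖ ≤
      ‖(η : ℂ)⁻¹ ^ J‖ * (∑' m : Fin J → ι, ‖hMonomial η φ c m‖) * σ x ^ J := by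
  rw [riccatiTerm, norm_mul, mul_assoc]
  exact mul_le_mul_of_nonneg_left
    (norm_hSeries_le hH (norm_oscTerm_le fun k => hg.norm_le k x)) (norm_nonneg _)

theorem tendsto_riccatiExpansion (hg : SmoothAmplitudes p M g g' σ)
    (hH : ∀ j ≤ n, Summable fun m : Fin j → ι => ‖hMonomial η φ c m‖) :
    Tendsto (fun x => riccatiExpansion η φ n (oscTerm c φ g x)) atTop (𝓝 1) := by
  have hJ : ∀ J ∈ Finset.range n, Tendsto
      (fun x => riccatiTerm η φ (J + 1) (oscTerm c φ g x)) atTop (𝓝 0) := fun J hJ => by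
    simpa only [riccatiTerm, mul_zero] using
      (tendsto_hSeries_succ_zero (hH _ (Finset.mem_range.1 hJ))
        (fun x => norm_oscTerm_le fun k => hg.norm_le_bound k x)
        hg.tendsto_oscTerm_zero).const_mul ((η : ℂ)⁻¹ ^ (J + 1))
  simpa only [riccatiExpansion_eq_sum_add_one, Finset.sum_const_zero, zero_add] using
    (tendsto_finsetSum _ hJ).add_const 1

theorem norm_riccatiExpansion_le (hg : SmoothAmplitudes p M g g' σ)
    (hH : ∀ j ≤ n, Summable fun m : Fin j → ι => ‖hMonomial η φ c m‖) (x : ℝ) :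
    ‖riccatiExpansion η φ n (oscTerm c φ g x)‖ ≤ ∑ J ∈ Finset.range (n + 1),
      ‖(η : ℂ)⁻¹ ^ J‖ * (∑' m : Fin J → ι, ‖hMonomial η φ c m‖) * M ^ J :=
  norm_sum_le_of_le _ fun J hJ =>
    (hg.norm_riccatiTerm_le (hH J (Nat.lt_succ_iff.1 (Finset.mem_range.1 hJ))) x).trans
      (mul_le_mul_of_nonneg_left (pow_le_pow_left₀ (hg.dominant_nonneg x) (hg.dominant_le x) J)
        (by positivity))

theorem integrableOn_hSeriesDeriv_oscTerm [Countable ι] (hg : SmoothAmplitudes p M g g' σ) {J : ℕ}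
    (hH : Summable fun m : Fin J → ι => ‖hMonomial η φ c m‖) :
    IntegrableOn (fun x => hSeriesDeriv η φ J (oscTerm c φ g x) (oscTerm c φ g' x)) (Ioi 0) :=
  integrable_hSeriesDeriv hH (fun x => norm_oscTerm_le fun k => hg.norm_le_bound k x)
    (fun x k => (norm_oscTerm x k).le)
    (fun k => (hg.continuous_oscTerm k).aestronglyMeasurable)
    (fun k => (by fun_prop : Continuous fun x : ℝ => c k * Complex.exp (-Complex.I * φ k * x))
      |>.aestronglyMeasurable.mul (hg.aestronglyMeasurable_deriv k))
    (fun k => (hg.aestronglyMeasurable_deriv k).norm.aemeasurable)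
    (fun k => by simpa only [enorm_norm] using hg.lintegral_deriv_le k) ENNReal.ofReal_ne_top

variable (hg : SmoothAmplitudes (n + 1) M g g' σ) (hc : Summable fun k => ‖c k‖)
  (hH : ∀ j ≤ n, Summable fun m : Fin j → ι => ‖hMonomial η φ c m‖)
  (hres : ∀ j < n, ∀ m : Fin (j + 1) → ι, η ≠ ∑ i, φ (m i))

include hg hc hH hres

theorem hasDerivAt_riccatiTerm {J : ℕ} (hJ : J < n) (x : ℝ) :
    HasDerivAt (fun y => riccatiTerm η φ (J + 1) (oscTerm c φ g y))
      (riccatiTermDeriv η φ J (oscTerm c φ g x) (oscTerm c φ g' x)) x :=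
  hasDerivAt_riccatiTerm_succ (hasDerivAt_hSeries_succ hc (fun j hj => hH j (by omega)) (hres J hJ)
    (fun y k => hasDerivAt_oscTerm (hg.hasDerivAt k y))
    (fun y => norm_oscTerm_le fun k => hg.norm_le_bound k y)
    (fun y => norm_oscTerm_le fun k => hg.norm_deriv_le k y) x)

theorem continuous_riccatiTerm {J : ℕ} (hJ : J ≤ n) :
    Continuous fun x => riccatiTerm η φ J (oscTerm c φ g x) := by
  cases J with
  | zero => simpa only [riccatiTerm_zero] using continuous_const
  | succ J => exact continuous_iff_continuousAt.2 fun x =>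
      (hg.hasDerivAt_riccatiTerm hc hH hres hJ x).continuousAt

theorem hasDerivAt_riccatiExpansion (x : ℝ) :
    HasDerivAt (fun y => riccatiExpansion η φ n (oscTerm c φ g y))
      (riccatiExpansionDeriv η φ n (oscTerm c φ g x) (oscTerm c φ g' x)) x := by
  simp only [riccatiExpansion_eq_sum_add_one]
  exact (HasDerivAt.fun_sum fun J hJ =>
    hg.hasDerivAt_riccatiTerm hc hH hres (Finset.mem_range.1 hJ) x).add_const 1

theorem integrableOn_riccatiTerm_mul {a b : ℕ} (ha : a ≤ n) (hb : b ≤ n) (hab : n ≤ a + b) :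
    IntegrableOn (fun x => riccatiTerm η φ a (oscTerm c φ g x) *
      riccatiTerm η φ b (oscTerm c φ g x) * ∑' k, oscTerm c φ g x k) (Ioi 0) := by
  refine hg.integrableOn_of_norm_le_dominant_pow (m := a + b + 1)
    (((hg.continuous_riccatiTerm hc hH hres ha).mul
      (hg.continuous_riccatiTerm hc hH hres hb)).mul (hg.continuous_tsum_oscTerm hc))
    (by omega)
    (C := (‖(η : ℂ)⁻¹ ^ a‖ * ∑' m : Fin a → ι, ‖hMonomial η φ c m‖) *
      (‖(η : ℂ)⁻¹ ^ b‖ * ∑' m : Fin b → ι, ‖hMonomial η φ c m‖) * ∑' k, ‖c k‖)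
    (by positivity) fun x => ?_
  rw [norm_mul, norm_mul]
  have hσ := hg.dominant_nonneg x
  refine (mul_le_mul (mul_le_mul (hg.norm_riccatiTerm_le (hH a ha) x)
    (hg.norm_riccatiTerm_le (hH b hb) x) (norm_nonneg _) (by positivity))
    (norm_tsum_oscTerm_le hc fun k => hg.norm_le k x) (norm_nonneg _) (by positivity)).trans_eq ?_
  ring

theorem integrableOn_riccatiDefect [Countable ι] {V : ℝ → ℝ}
    (hV : IntegrableOn (fun x => (V x : ℂ) - ∑' k, oscTerm c φ g x k) (Ioi 0)) :
    IntegrableOn (fun x => riccatiDefect η (V x) (riccatiExpansion η φ n (oscTerm c φ g x))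
      (riccatiExpansionDeriv η φ n (oscTerm c φ g x) (oscTerm c φ g' x))) (Ioi 0) := by
  have hcont : Continuous fun x => riccatiExpansion η φ n (oscTerm c φ g x) :=
    continuous_iff_continuousAt.2 fun x =>
      (hg.hasDerivAt_riccatiExpansion hc hH hres x).continuousAt
  simp only [riccatiDefect_riccatiExpansion]
  refine ((Integrable.const_mul ?_ _).add (Integrable.const_mul ?_ _)).add ?_
  · exact hV.bdd_mul (hcont.pow 2).aestronglyMeasurable (Eventually.of_forall fun x =>
      (norm_pow _ 2).trans_le
        (pow_le_pow_left₀ (norm_nonneg _) (hg.norm_riccatiExpansion_le hH x) 2))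
  · refine integrable_finsetSum _ fun a ha => integrable_finsetSum _ fun b hb => ?_
    have ha := Finset.mem_range.1 ha
    have hb := Finset.mem_Ico.1 hb
    exact hg.integrableOn_riccatiTerm_mul hc hH hres (by omega) (by omega) (by omega)
  · exact integrable_finsetSum _ fun J hJ =>
      (hg.integrableOn_hSeriesDeriv_oscTerm (hH _ (Finset.mem_range.1 hJ))).const_mul _

end SmoothAmplitudes

section OscillatoryPotential

variable {ι : Type*} {c : ι → ℂ} {φ : ι → ℝ} {γ g : ι → ℝ → ℂ} {V : ℝ → ℝ} {N : ℝ}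

theorem exists_norm_le_of_iSup_eVariationOn_lt_top {p : ℕ}
    (hγ : ⨆ k, eVariationOn (γ k) (Ioi 0) < ⊤)
    (hLp : ∫⁻ x in Ioi 0, (⨆ k, ‖γ k x‖ₑ) ^ p < ⊤) :
    ∃ N, ∀ x ∈ Ioi (0 : ℝ), ∀ k, ‖γ k x‖ ≤ N := by
  refine ⟨(⨆ k, eVariationOn (γ k) (Ioi 0)).toReal, fun x hx k => ?_⟩
  have hvar := le_iSup (fun k => eVariationOn (γ k) (Ioi 0)) k
  have hγk : BoundedVariationOn (γ k) (Ioi 0) := (hvar.trans_lt hγ).ne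
  have hγ0 := tendsto_zero_of_boundedVariationOn_of_lintegral_pow_lt_top hγk
    ((lintegral_mono fun x => pow_le_pow_left' (le_iSup (fun k => ‖γ k x‖ₑ) k) p).trans_lt hLp)
  exact ((norm_le_tailVariation hγk (Ioi_mem_atTop 0) hγ0 hx).trans
    (tailVariation_le hγk x)).trans (ENNReal.toReal_mono hγ.ne hvar)

variable (hV : ∀ x ∈ Ioi 0, (V x : ℂ) = ∑' k, oscTerm c φ γ x k) (hc : Summable fun k => ‖c k‖)
  (hN : ∀ x ∈ Ioi (0 : ℝ), ∀ k, ‖γ k x‖ ≤ N)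

include hV hc hN

theorem abs_le_of_eq_tsum_oscTerm {x : ℝ} (hx : x ∈ Ioi 0) : |V x| ≤ (∑' k, ‖c k‖) * N := by
  rw [← Real.norm_eq_abs, ← Complex.norm_real, hV x hx]
  exact norm_tsum_oscTerm_le hc (hN x hx)

theorem continuousAt_of_eq_tsum_oscTerm {x : ℝ} (hx : x ∈ Ioi 0)
    (hγ : ∀ k, ContinuousAt (γ k) x) : ContinuousAt V x := by
  have hnhds : Ioi 0 ∈ 𝓝 x := Ioi_mem_nhds hx
  have hsum : ContinuousAt (fun y => ∑' k, oscTerm c φ γ y k) x := by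
    refine tendsto_tsum_of_dominated_convergence (hc.mul_right N) (fun k => ?_) ?_
    · change ContinuousAt (fun y : ℝ => c k * Complex.exp (-Complex.I * φ k * y) * γ k y) x
      have := hγ k
      fun_prop
    · filter_upwards [hnhds] with y hy using norm_oscTerm_le (hN y hy)
  refine (Complex.continuous_re.continuousAt.comp hsum).congr ?_
  filter_upwards [hnhds] with y hy
  rw [Function.comp_apply, ← hV y hy, Complex.ofReal_re]

theorem countable_setOf_not_continuousAt_of_eq_tsum_oscTerm [Countable ι]
    (hγ : ∀ k, BoundedVariationOn (γ k) (Ioi 0)) : {x ∈ Ioi 0 | ¬ContinuousAt V x}.Countable := by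
  refine (countable_iUnion fun k => countable_setOf_not_continuousAt_of_boundedVariationOn (hγ k)
    isOpen_Ioi).mono fun x hx => mem_iUnion.2 ?_
  by_contra! hcont
  exact hx.2 (continuousAt_of_eq_tsum_oscTerm hV hc hN hx.1 fun k =>
    by_contra fun hk => hcont k ⟨hx.1, hk⟩)

theorem integrableOn_sub_tsum_oscTerm [Countable ι] {M : ℝ}
    (hγm : ∀ k, AEStronglyMeasurable (γ k) (volume.restrict (Ioi 0)))
    (hg : ∀ k, Continuous (g k)) (hgM : ∀ k x, ‖g k x‖ ≤ M)
    (hgγ : ∀ k, ∫⁻ x in Ioi 0, ‖g k x - γ k x‖ₑ ≤ ENNReal.ofReal M) :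
    IntegrableOn (fun x => (V x : ℂ) - ∑' k, oscTerm c φ g x k) (Ioi 0) := by
  have hsub : ∀ x k, oscTerm c φ γ x k - oscTerm c φ g x k = oscTerm c φ (γ - g) x k :=
    fun x k => (mul_sub _ _ _).symm
  have hint : IntegrableOn (fun x => ∑' k, oscTerm c φ (γ - g) x k) (Ioi 0) := by
    refine integrable_tsum_of_lintegral_enorm_le (C := ENNReal.ofReal M) (fun k => ?_) hc
      ENNReal.ofReal_ne_top fun k => ?_
    · have hphase : Continuous fun x : ℝ => c k * Complex.exp (-Complex.I * φ k * x) := by fun_prop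
      exact hphase.aestronglyMeasurable.mul ((hγm k).sub (hg k).aestronglyMeasurable)
    · calc ∫⁻ x in Ioi 0, ‖oscTerm c φ (γ - g) x k‖ₑ
          = ∫⁻ x in Ioi 0, ‖c k‖ₑ * ‖g k x - γ k x‖ₑ := lintegral_congr fun x => by
            rw [← ofReal_norm, norm_oscTerm, ENNReal.ofReal_mul (norm_nonneg _), ofReal_norm,
              ofReal_norm, enorm_sub_rev]
            rfl
        _ = ‖c k‖ₑ * ∫⁻ x in Ioi 0, ‖g k x - γ k x‖ₑ := lintegral_const_mul' _ _ enorm_ne_top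
        _ ≤ ‖c k‖ₑ * ENNReal.ofReal M := mul_le_mul_right (hgγ k) _
  refine hint.congr_fun (fun x hx => ?_) measurableSet_Ioi
  simp only [hV x hx, ← hsub]
  exact (Summable.of_norm_bounded (hc.mul_right N) (norm_oscTerm_le (hN x hx))).tsum_sub
    (Summable.of_norm_bounded (hc.mul_right M) (norm_oscTerm_le fun k => hgM k x))

end OscillatoryPotential

namespace IsWeakSolutionReal

variable {V u u' : ℝ → ℝ}

theorem continuousOn_deriv {E : ℝ} (h : IsWeakSolutionReal V E u u') :
    ContinuousOn u' (Ioi 0) := by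
  intro x (hx : 0 < x)
  have hnhds : Icc (x / 2) (x + 1) ∈ 𝓝 x := Icc_mem_nhds (by linarith) (by linarith)
  have hprim := intervalIntegral.continuousOn_primitive_interval'
    (h.2 (x / 2) (x + 1) (by linarith) (by linarith)).1 left_mem_uIcc
  rw [uIcc_of_le (by linarith)] at hprim
  refine (((hprim.continuousAt hnhds).const_add (u' (x / 2))).congr ?_).continuousWithinAt
  filter_upwards [hnhds] with y hy
  exact add_eq_of_eq_sub' (h.2 (x / 2) y (by linarith) hy.1).2.symm

theorem hasDerivAt_deriv {E : ℝ} (h : IsWeakSolutionReal V E u u') {x : ℝ} (hx : x ∈ Ioi 0)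
    (hV : ContinuousAt V x) : HasDerivAt u' (V x * u x - E * u x) x := by
  have hx : 0 < x := hx
  have hu : ContinuousAt u x := (h.1 x hx).continuousAt
  have hnhds : Ioc (x / 2) (x + 1) ∈ 𝓝 x := Ioc_mem_nhds (by linarith) (by linarith)
  have hmeas := (h.2 (x / 2) (x + 1) (by linarith) (by linarith)).1.1.aestronglyMeasurable
  have hprim := intervalIntegral.integral_hasDerivAt_right
    (h.2 (x / 2) x (by linarith) (by linarith)).1 ⟨_, hnhds, hmeas⟩
    ((hV.mul hu).sub (hu.const_mul E))
  refine (hprim.const_add (u' (x / 2))).congr_of_eventuallyEq ?_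
  filter_upwards [hnhds] with y hy
  exact (add_eq_of_eq_sub' (h.2 (x / 2) y (by linarith) hy.1.le).2.symm).symm

variable {η K : ℝ} (h : IsWeakSolutionReal V (η ^ 2 / 4) u u')

include h

theorem continuousOn_amplitude : ContinuousOn (fun x => amplitude η (u x) (u' x)) (Ioi 0) := by
  have hu : ContinuousOn u (Ioi 0) := fun x hx => (h.1 x hx).continuousAt.continuousWithinAt
  have hu' := h.continuousOn_deriv
  unfold amplitude
  fun_prop

variable (hη : η ≠ 0)

include hη

theorem hasDerivAt_amplitude {x : ℝ} (hx : x ∈ Ioi 0 \ {x ∈ Ioi 0 | ¬ContinuousAt V x}) :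
    HasDerivAt (fun x => amplitude η (u x) (u' x))
      (amplitudeField η (V x) (amplitude η (u x) (u' x))) x :=
  _root_.hasDerivAt_amplitude hη (h.1 x hx.1)
    (h.hasDerivAt_deriv hx.1 (by_contra fun hVx => hx.2 ⟨hx.1, hVx⟩))

variable (hVc : {x ∈ Ioi 0 | ¬ContinuousAt V x}.Countable) (hVK : ∀ x ∈ Ioi 0, |V x| ≤ K)
  (hu0 : ∃ x ∈ Ioi 0, u x ≠ 0)

include hVc hVK hu0

theorem eventually_amplitude_ne_zero : ∀ᶠ x in atTop, amplitude η (u x) (u' x) ≠ 0 := by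
  obtain ⟨a, ha, hua⟩ := hu0
  have hAa : amplitude η (u a) (u' a) ≠ 0 := fun hzero => by
    have hsq := norm_amplitude_sq η (u a) (u' a)
    have hpos : 0 < η ^ 2 / 4 * u a ^ 2 := by positivity
    rw [hzero, norm_zero] at hsq
    nlinarith [sq_nonneg (u' a)]
  filter_upwards [Ici_mem_atTop a] with b hb
  have hIcc : Icc a b ⊆ Ioi 0 := fun x hx => (mem_Ioi.1 ha).trans_le hx.1
  exact ne_zero_of_hasDerivAt_amplitudeField (A := fun x => amplitude η (u x) (u' x)) hVc hb
    (fun x hx => hVK x (hIcc (Ioo_subset_Icc_self hx))) (h.continuousOn_amplitude.mono hIcc)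
    (fun x hx => h.hasDerivAt_amplitude hη ⟨hIcc (Ioo_subset_Icc_self hx.1), hx.2⟩) hAa

theorem exists_pos_tendsto_of_riccatiDefect {g g' : ℝ → ℂ} (hg : ∀ x, HasDerivAt g (g' x) x)
    (hg1 : Tendsto g atTop (𝓝 1))
    (hρ : IntegrableOn (fun x => riccatiDefect η (V x) (g x) (g' x)) (Ioi 0)) :
    ∃ L, 0 < L ∧ Tendsto (fun x => u' x ^ 2 + η ^ 2 / 4 * u x ^ 2) atTop (𝓝 L) := by
  obtain ⟨L, hL, hlim⟩ := exists_pos_tendsto_norm_of_riccatiDefect hVc h.continuousOn_amplitude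
    (fun x => h.hasDerivAt_amplitude hη) (h.eventually_amplitude_ne_zero hη hVc hVK hu0) hg hg1 hρ
  exact ⟨L ^ 2, pow_pos hL 2, by simpa only [norm_amplitude_sq] using hlim.pow 2⟩

end IsWeakSolutionReal

theorem stmt3_general {ι : Type*} [Countable ι] {p : ℕ} {η : ℝ} (hη : η ≠ 0)
    {c : ι → ℂ} {φ : ι → ℝ} {γ : ι → ℝ → ℂ} {V : ℝ → ℝ}
    (hV : ∀ x ∈ Ioi 0, (V x : ℂ) = ∑' k, oscTerm c φ γ x k)
    (hBV : ⨆ k, eVariationOn (γ k) (Ioi 0) < ⊤)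
    (hLp : ∫⁻ x in Ioi 0, (⨆ k, ‖γ k x‖ₑ) ^ p < ⊤)
    (hc : Summable fun k => ‖c k‖)
    (hsd : ∀ j, 1 ≤ j → j < p →
      Summable fun m : Fin j → ι => ‖∏ i, c (m i)‖ * |hTuple η (φ ∘ m)|)
    (hres : ∀ J, 1 ≤ J → J < p → ∀ m : Fin J → ι, η ≠ ∑ i, φ (m i))
    {u u' : ℝ → ℝ} (hu : IsWeakSolutionReal V (η ^ 2 / 4) u u') (hu0 : ∃ x ∈ Ioi 0, u x ≠ 0) :
    ∃ L, 0 < L ∧ Tendsto (fun x => u' x ^ 2 + η ^ 2 / 4 * u x ^ 2) atTop (𝓝 L) := by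
  obtain ⟨n, rfl⟩ : ∃ n, p = n + 1 := Nat.exists_eq_succ_of_ne_zero (by rintro rfl; simp at hLp)
  have hH : ∀ j ≤ n, Summable fun m : Fin j → ι => ‖hMonomial η φ c m‖ := fun j hj => by
    rcases j.eq_zero_or_pos with rfl | hj0
    · exact Summable.of_finite
    · simpa only [norm_hMonomial] using hsd j hj0 (by omega)
  have hres' : ∀ j < n, ∀ m : Fin (j + 1) → ι, η ≠ ∑ i, φ (m i) := fun j hj =>
    hres (j + 1) (by omega) (by omega)
  have hγ : ∀ k, BoundedVariationOn (γ k) (Ioi 0) := fun k =>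
    ((le_iSup (fun k => eVariationOn (γ k) (Ioi 0)) k).trans_lt hBV).ne
  obtain ⟨N, hN⟩ := exists_norm_le_of_iSup_eVariationOn_lt_top hBV hLp
  obtain ⟨M, g, g', σ, hg, hgγ⟩ := exists_smoothAmplitudes hBV hLp
  have hVg := integrableOn_sub_tsum_oscTerm hV hc hN
    (fun k => (aestronglyMeasurable_indicator_iff measurableSet_Ioi).1
      (stronglyMeasurable_indicator_Ioi_of_boundedVariationOn (hγ k)).aestronglyMeasurable)
    (fun k => continuous_iff_continuousAt.2 fun x => (hg.hasDerivAt k x).continuousAt)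
    hg.norm_le_bound hgγ
  exact hu.exists_pos_tendsto_of_riccatiDefect hη
    (countable_setOf_not_continuousAt_of_eq_tsum_oscTerm hV hc hN hγ)
    (fun x => abs_le_of_eq_tsum_oscTerm hV hc hN) hu0
    (hg.hasDerivAt_riccatiExpansion hc hH hres') (hg.tendsto_riccatiExpansion hH)
    (hg.integrableOn_riccatiDefect hc hH hres' hVg)

end

theorem stmt3 (p : ℕ) (hp : 2 ≤ p) (η : ℝ) (hη : 0 < η)
    (c : ℕ → ℂ) (φ : ℕ → ℝ) (γ : ℕ → ℝ → ℂ)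
    (V : ℝ → ℝ)
    (hV : ∀ x ∈ Set.Ioi (0:ℝ),
      (V x : ℂ) = ∑' k, c k * Complex.exp (-Complex.I * (φ k) * x) * γ k x)
    (hBV : ⨆ k, eVariationOn (γ k) (Set.Ioi 0) < ⊤)
    (hLp : ∫⁻ x in Set.Ioi (0:ℝ), (⨆ k, (‖γ k x‖₊ : ℝ≥0∞)) ^ p < ⊤)
    (hc : Summable fun k => ‖c k‖)
    (hsd : ∀ j : ℕ, 1 ≤ j → j ≤ p - 1 →
      Summable fun m : Fin j → ℕ => ‖∏ i, c (m i)‖ * |hFun j η (padFin j φ m)|)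
    (hres : ∀ K J : ℕ, 1 ≤ K → K ≤ J → J ≤ p → ∀ (m : Fin J → ℕ) (ε : Fin J → ℝ),
      (∀ i, ε i = 1 ∨ ε i = -1) → (K : ℝ) * η ≠ ∑ i, ε i * φ (m i))
    (hinv : ∃ star : ℕ → ℕ, Function.Involutive star ∧
      (∀ k, c (star k) = starRingEnd ℂ (c k)) ∧
      (∀ k, φ (star k) = -φ k) ∧
      (∀ k, ∀ x ∈ Set.Ioi (0:ℝ), γ (star k) x = starRingEnd ℂ (γ k x))) :
    ∀ u u' : ℝ → ℝ, IsWeakSolutionReal V (η ^ 2 / 4) u u' →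
      (∃ x ∈ Set.Ioi (0:ℝ), u x ≠ 0) →
      ∃ L : ℝ, 0 < L ∧
        Filter.Tendsto (fun x => u' x ^ 2 + (η ^ 2 / 4) * u x ^ 2)
          Filter.atTop (nhds L) := by
  intro u u' hu hu0
  exact stmt3_general hη.ne' hV hBV hLp hc (fun j hj hjp => hsd j hj (by omega))
    (fun J hJ hJp m h => hres 1 J le_rfl hJ hJp.le m 1 (fun _ => Or.inl rfl) (by simpa using h))
    hu hu0
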